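/- arXiv:1312.0471 — 2 statements merged into one kernel-verified Lean document; each statement's English description precedes it below -/
import Mathlib

section
/- Let $\varphi$ be a parabolic automorphism of $\mathbb{D}$ with unique fixed point $a \in \partial\mathbb{D}$, and let $\psi$ be holomorphic on $\mathbb{D}$, continuous on $\overline{\mathbb{D}}$, and bounded away from zero. Then the spectrum of $C_{\psi,\varphi}$ on the Hardy space $H^2(\mathbb{D})$ is the circle $\{\lambda \in \mathbb{C} : |\lambda| = |\psi(a)|\}$. -/
open Metric Filter

/-- The Hardy space `H²(𝔻)`, modelled as the space of square-summable Taylor coefficient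
sequences. -/
abbrev H2 : Type := lp (fun _ : ℕ => ℂ) 2

/-- The holomorphic function on the unit disc associated to an element of `H²(𝔻)`. -/
noncomputable def H2.toFun (f : H2) (z : ℂ) : ℂ := ∑' n : ℕ, f n * z ^ n

theorem H2.summable (f : H2) {z : ℂ} (hz : z ∈ ball (0 : ℂ) 1) :
    Summable fun n : ℕ => f n * z ^ n := by
  have hz' : ‖z‖ < 1 := by simpa using hz
  refine Summable.of_norm_bounded (g := fun n => ‖f‖ * ‖z‖ ^ n)
    ((summable_geometric_of_lt_one (norm_nonneg _) hz').mul_left _) (fun n => ?_)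
  rw [norm_mul, norm_pow]
  gcongr
  exact lp.norm_apply_le_norm (by norm_num) f n

theorem H2.toFun_norm_le (f : H2) {z : ℂ} (hz : z ∈ ball (0 : ℂ) 1) :
    ‖f.toFun z‖ ≤ ‖f‖ * (1 - ‖z‖)⁻¹ := by
  have hz' : ‖z‖ < 1 := by simpa using hz
  refine tsum_of_norm_bounded (g := fun n => ‖f‖ * ‖z‖ ^ n)
    ((hasSum_geometric_of_lt_one (norm_nonneg _) hz').mul_left _) (fun n => ?_)
  rw [norm_mul, norm_pow]
  gcongr
  exact lp.norm_apply_le_norm (by norm_num) f n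

theorem H2.toFun_sub (f g : H2) {z : ℂ} (hz : z ∈ ball (0 : ℂ) 1) :
    (f - g).toFun z = f.toFun z - g.toFun z := by
  unfold H2.toFun
  rw [← (f.summable hz).tsum_sub (g.summable hz)]
  congr 1; ext n; simp [sub_mul]

theorem H2.toFun_add (f g : H2) {z : ℂ} (hz : z ∈ ball (0 : ℂ) 1) :
    (f + g).toFun z = f.toFun z + g.toFun z := by
  unfold H2.toFun
  rw [← (f.summable hz).tsum_add (g.summable hz)]
  congr 1; ext n; simp [add_mul]

theorem H2.toFun_smul (c : ℂ) (f : H2) (z : ℂ) :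
    (c • f).toFun z = c * f.toFun z := by
  unfold H2.toFun
  rw [← tsum_mul_left]
  congr 1; ext n; simp [mul_assoc]

theorem H2.toFun_tendsto {F : ℕ → H2} {f : H2} (h : Tendsto F atTop (nhds f)) {z : ℂ}
    (hz : z ∈ ball (0 : ℂ) 1) : Tendsto (fun n => (F n).toFun z) atTop (nhds (f.toFun z)) := by
  rw [tendsto_iff_norm_sub_tendsto_zero] at h ⊢
  have := h.mul_const ((1 - ‖z‖)⁻¹)
  rw [zero_mul] at this
  refine squeeze_zero (fun _ => norm_nonneg _) (fun n => ?_) this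
  rw [← H2.toFun_sub _ _ hz]
  exact H2.toFun_norm_le _ hz

theorem H2.hasFPowerSeries (f : H2) :
    HasFPowerSeriesAt f.toFun (FormalMultilinearSeries.ofScalars ℂ (fun n => f n)) 0 := by
  rw [hasFPowerSeriesAt_iff]
  filter_upwards [ball_mem_nhds (0:ℂ) one_pos] with z hz
  have := (f.summable hz).hasSum
  simpa [H2.toFun, mul_comm, FormalMultilinearSeries.coeff_ofScalars] using this

theorem H2.ext_toFun {f g : H2} (h : ∀ z ∈ ball (0:ℂ) 1, f.toFun z = g.toFun z) : f = g := by
  have h1 : HasFPowerSeriesAt g.toFun (FormalMultilinearSeries.ofScalars ℂ (fun n => f n)) 0 := by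
    refine f.hasFPowerSeries.congr ?_
    filter_upwards [ball_mem_nhds (0:ℂ) one_pos] with z hz using h z hz
  have h2 := h1.eq_formalMultilinearSeries g.hasFPowerSeries
  ext n
  have := congrArg (fun p => FormalMultilinearSeries.coeff p n) h2
  simpa [FormalMultilinearSeries.coeff_ofScalars] using this

open MeasureTheory Complex in
theorem L1_coeff (f : ℂ → ℂ) (n : ℤ) :
    fourierCoeffOn (Real.two_pi_pos) (fun t : ℝ => f (circleMap 0 1 t)) n =
      (2 * Real.pi * I : ℂ)⁻¹ • ∮ z in C(0, 1), z ^ (-n - 1) * f z := by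
  rw [fourierCoeffOn_eq_integral, circleIntegral]
  have : ∀ t : ℝ, deriv (circleMap 0 1) t • (circleMap 0 1 t ^ (-n-1) * f (circleMap 0 1 t)) =
     I * (fourier (-n) (t : AddCircle (2 * Real.pi - 0)) • f (circleMap 0 1 t)) := by
    intro t
    rw [deriv_circleMap, fourier_coe_apply]
    have h0 : circleMap 0 1 t ≠ 0 := by simp [circleMap]
    have e : circleMap 0 1 t ^ (-n) = Complex.exp (2 * Real.pi * I * ((-n : ℤ):ℂ) * t / ((2 * Real.pi - 0 : ℝ):ℂ)) := by
      simp only [circleMap, zero_add, ofReal_one, one_mul]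
      rw [← Complex.exp_int_mul]
      congr 1
      have : (Real.pi : ℂ) ≠ 0 := by exact_mod_cast Real.pi_ne_zero
      push_cast
      field_simp
      ring
    rw [← e, zpow_sub_one₀ h0]
    simp only [smul_eq_mul]
    field_simp
  simp_rw [this]
  rw [intervalIntegral.integral_const_mul]
  simp only [smul_eq_mul, real_smul]
  have : (Real.pi : ℂ) ≠ 0 := by exact_mod_cast Real.pi_ne_zero
  push_cast
  field_simp
  simp

open MeasureTheory Complex in
theorem L1 (f : ℂ → ℂ) (hc : ContinuousOn f (closedBall 0 1))
    (hd : DifferentiableOn ℂ f (ball 0 1)) :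
    ∃ F : H2, (∀ z ∈ ball (0:ℂ) 1, F.toFun z = f z) ∧
      ‖F‖ ^ 2 = (2 * Real.pi)⁻¹ * ∫ t in (0:ℝ)..2 * Real.pi, ‖f (circleMap 0 1 t)‖ ^ 2 := by
  have hcm : ∀ t, circleMap 0 1 t ∈ closedBall (0:ℂ) 1 := fun t =>
    circleMap_mem_closedBall 0 zero_le_one t
  have hcc : Continuous fun t : ℝ => f (circleMap 0 1 t) :=
    hc.comp_continuous (continuous_circleMap 0 1) hcm
  set c := fourierCoeffOn (Real.two_pi_pos) (fun t : ℝ => f (circleMap 0 1 t)) with hcdef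
  have hL2 : MemLp (fun t : ℝ => f (circleMap 0 1 t)) 2 (volume.restrict (Set.Ioc 0 (2 * Real.pi))) := by
    obtain ⟨C, hC⟩ := (isCompact_closedBall (0:ℂ) 1).exists_bound_of_continuousOn hc
    exact MemLp.of_bound hcc.aestronglyMeasurable C (Eventually.of_forall fun t => hC _ (hcm t))
  have hS := hasSum_sq_fourierCoeffOn Real.two_pi_pos hL2
  rw [← hcdef] at hS
  have hneg : ∀ n : ℕ, c (-(n+1 : ℕ) : ℤ) = 0 := by
    intro n
    rw [hcdef, L1_coeff]
    have : (∮ z in C(0, 1), z ^ (-(-(n+1 : ℕ) : ℤ) - 1) * f z) = ∮ z in C(0, 1), z ^ n * f z := by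
      congr 1; ext z; congr 1
      rw [← zpow_natCast]; congr 1; push_cast; ring
    rw [this, circleIntegral_eq_zero_of_differentiable_on_off_countable zero_le_one
      Set.countable_empty, smul_zero]
    · exact (continuousOn_id.pow n).mul hc
    · intro z hz
      exact (differentiableAt_id.pow n).mul (hd.differentiableAt (isOpen_ball.mem_nhds hz.1))
  have hS' : HasSum (fun n : ℕ => ‖c n‖ ^ 2)
      ((2 * Real.pi)⁻¹ * ∫ t in (0:ℝ)..2 * Real.pi, ‖f (circleMap 0 1 t)‖ ^ 2) := by
    have := (Nat.cast_injective (R := ℤ)).hasSum_iff (f := fun i => ‖c i‖ ^ 2)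
      (a := (2 * Real.pi)⁻¹ * ∫ t in (0:ℝ)..2 * Real.pi, ‖f (circleMap 0 1 t)‖ ^ 2) ?_
    · refine this.2 ?_
      simpa using hS
    · intro i hi
      obtain ⟨n, rfl | rfl⟩ := i.eq_nat_or_neg
      · simp at hi
      · rcases n with _ | n
        · simp at hi
        · show ‖c _‖ ^ 2 = 0
          rw [hneg n]; simp
  have hmem : Memℓp (fun n : ℕ => c n) 2 := by
    apply memℓp_gen
    simpa using hS'.summable
  refine ⟨⟨fun n => c n, hmem⟩, ?_, ?_⟩
  · intro z hz
    have hps := hasFPowerSeriesOnBall_of_differentiable_off_countable (R := 1) (c := 0) (f := f)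
      Set.countable_empty (by simpa using hc)
      (fun z hz => hd.differentiableAt (isOpen_ball.mem_nhds (by simpa using hz.1))) one_pos
    have h1 := hps.hasSum (y := z) (by rw [Metric.eball_coe]; simpa using hz)
    rw [zero_add] at h1
    rw [← h1.tsum_eq]
    unfold H2.toFun
    congr 1
    ext n
    rw [cauchyPowerSeries_apply]
    simp only
    rw [hcdef, L1_coeff]
    simp only [smul_eq_mul, sub_zero]
    rw [mul_assoc]
    congr 1
    rw [mul_comm, ← smul_eq_mul, ← circleIntegral.integral_smul]
    refine circleIntegral.integral_congr (by norm_num) (fun w hw => ?_)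
    have hw0 : w ≠ 0 := by rintro rfl; simp at hw
    simp only [smul_eq_mul]
    rw [zpow_sub_one₀ hw0, zpow_neg, zpow_natCast, div_pow]
    field_simp
  · have := lp.norm_rpow_eq_tsum (p := 2) (by norm_num) (⟨fun n => c n, hmem⟩ : H2)
    simp only [ENNReal.toReal_ofNat, Real.rpow_ofNat] at this
    rw [this]
    exact hS'.tsum_eq


/-- parametrisation of the circle minus `a` by the real line -/
noncomputable def zx (a : ℂ) (x : ℝ) : ℂ := a * (-(1 + Complex.I * x) / (1 - Complex.I * x))

/-- the parabolic flow -/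
noncomputable def Phi (a : ℂ) (s : ℝ) (z : ℂ) : ℂ :=
  a - (a - z) / (1 + Complex.I * s * (starRingEnd ℂ a * (a - z)))

theorem one_sub_I_ne (x : ℝ) : (1 - Complex.I * x : ℂ) ≠ 0 := by
  intro h
  have := congrArg Complex.re h
  simp at this

theorem one_add_I_ne (x : ℝ) : (1 + Complex.I * x : ℂ) ≠ 0 := by
  intro h
  have := congrArg Complex.re h
  simp at this

theorem zx_eq {a : ℂ} (ha : ‖a‖ = 1) (x : ℝ) :
    zx a x = circleMap 0 1 (Complex.arg (-a) + 2 * Real.arctan x) := by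
  have h1 : Complex.exp (Complex.I * (Complex.arg (-a))) = -a := by
    have := Complex.norm_mul_exp_arg_mul_I (-a)
    rw [norm_neg, ha] at this
    rw [mul_comm]; simpa using this
  have h2 : Complex.exp (Real.arctan x * Complex.I) ^ 2 = (1 + Complex.I * x) / (1 - Complex.I * x) := by
    rw [Complex.exp_mul_I, ← Complex.ofReal_cos, ← Complex.ofReal_sin, Real.cos_arctan,
      Real.sin_arctan]
    have hp : (0:ℝ) < 1 + x^2 := by positivity
    have hs : (√(1 + x^2) : ℝ) ≠ 0 := (Real.sqrt_pos.2 hp).ne'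
    have hs' : ((√(1 + x^2) : ℝ) : ℂ) ≠ 0 := by exact_mod_cast hs
    have hsq : ((√(1 + x^2) : ℝ) : ℂ) ^ 2 = 1 + x ^ 2 := by
      have := Real.sq_sqrt hp.le
      exact_mod_cast this
    push_cast
    rw [eq_div_iff (one_sub_I_ne x)]
    have : ((1:ℂ) / (√(1 + x^2) : ℝ) + x / (√(1 + x^2) : ℝ) * Complex.I) ^ 2
        = (1 + Complex.I * x) ^ 2 / (√(1 + x^2) : ℝ) ^ 2 := by
      field_simp
    rw [this, hsq]
    have hz : (1 + x ^ 2 : ℂ) = (1 - Complex.I * x) * (1 + Complex.I * x) := by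
      linear_combination (x:ℂ)^2 * Complex.I_sq
    rw [hz]
    have := one_sub_I_ne x
    have := one_add_I_ne x
    field_simp
  have : circleMap 0 1 (Complex.arg (-a) + 2 * Real.arctan x) =
    Complex.exp (Complex.I * (Complex.arg (-a))) * Complex.exp (Real.arctan x * Complex.I) ^ 2 := by
    rw [← Complex.exp_nat_mul, ← Complex.exp_add]
    simp only [circleMap]
    push_cast
    simp only [zero_add, one_mul]
    congr 1; ring
  rw [this, h1, h2, zx]
  ring

open MeasureTheory in
theorem cov {a : ℂ} (ha : ‖a‖ = 1) (G : ℂ → ℝ) :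
    (2 * Real.pi)⁻¹ * ∫ t in (0:ℝ)..2 * Real.pi, G (circleMap 0 1 t) =
      Real.pi⁻¹ * ∫ x : ℝ, (1 + x ^ 2)⁻¹ * G (zx a x) := by
  have h1 := integral_image_eq_integral_abs_deriv_smul (s := Set.univ) (f := Real.arctan)
    (f' := fun x => (1 + x ^ 2)⁻¹) MeasurableSet.univ
    (fun x _ => (Real.hasDerivAt_arctan' x).hasDerivWithinAt) Real.arctan_injective.injOn
    (fun t => G (circleMap 0 1 (Complex.arg (-a) + 2 * t)))
  rw [Set.image_univ, Real.range_arctan, setIntegral_univ] at h1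
  have h2 : ∫ x : ℝ, (1 + x ^ 2)⁻¹ * G (zx a x) =
      ∫ x : ℝ, |(1 + x ^ 2)⁻¹| • G (circleMap 0 1 (Complex.arg (-a) + 2 * Real.arctan x)) := by
    congr 1; ext x
    rw [zx_eq ha, abs_of_pos (by positivity), smul_eq_mul]
  rw [h2, ← h1, ← integral_Ioc_eq_integral_Ioo, ← intervalIntegral.integral_of_le
    (by linarith [Real.pi_pos])]
  rw [intervalIntegral.integral_comp_add_mul (fun t => G (circleMap 0 1 t)) two_ne_zero]
  have hp : Function.Periodic (fun t => G (circleMap 0 1 t)) (2 * Real.pi) := fun t => by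
    simp only [periodic_circleMap 0 1 t]
  have h3 := hp.intervalIntegral_add_eq (Complex.arg (-a) + 2 * -(Real.pi/2)) 0
  rw [zero_add] at h3
  rw [← h3, smul_eq_mul, mul_inv]
  have : Complex.arg (-a) + 2 * -(Real.pi/2) + 2 * Real.pi = Complex.arg (-a) + 2 * (Real.pi/2) := by ring
  rw [this]; ring

theorem L1' {a : ℂ} (ha : ‖a‖ = 1) (f : ℂ → ℂ) (hc : ContinuousOn f (closedBall 0 1))
    (hd : DifferentiableOn ℂ f (ball 0 1)) :
    ∃ F : H2, (∀ z ∈ ball (0:ℂ) 1, F.toFun z = f z) ∧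
      ‖F‖ ^ 2 = Real.pi⁻¹ * ∫ x : ℝ, (1 + x ^ 2)⁻¹ * ‖f (zx a x)‖ ^ 2 := by
  obtain ⟨F, h1, h2⟩ := L1 f hc hd
  exact ⟨F, h1, h2.trans (cov ha (fun z => ‖f z‖ ^ 2))⟩

theorem L1'' {a : ℂ} (ha : ‖a‖ = 1) (F : H2) (f : ℂ → ℂ) (hc : ContinuousOn f (closedBall 0 1))
    (hd : DifferentiableOn ℂ f (ball 0 1)) (hF : ∀ z ∈ ball (0:ℂ) 1, F.toFun z = f z) :
      ‖F‖ ^ 2 = Real.pi⁻¹ * ∫ x : ℝ, (1 + x ^ 2)⁻¹ * ‖f (zx a x)‖ ^ 2 := by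
  obtain ⟨F', h1, h2⟩ := L1' ha f hc hd
  have : F = F' := H2.ext_toFun fun z hz => (hF z hz).trans (h1 z hz).symm
  rw [this, h2]

theorem zx_mem {a : ℂ} (ha : ‖a‖ = 1) (x : ℝ) : zx a x ∈ closedBall (0:ℂ) 1 := by
  rw [zx_eq ha]; exact circleMap_mem_closedBall 0 zero_le_one _

theorem zx_continuous {a : ℂ} (ha : ‖a‖ = 1) : Continuous (zx a) := by
  have : zx a = fun x => circleMap 0 1 (Complex.arg (-a) + 2 * Real.arctan x) :=
    funext (zx_eq ha)
  rw [this]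
  exact (continuous_circleMap 0 1).comp (by fun_prop)

theorem a_sub_zx (a : ℂ) (x : ℝ) : a - zx a x = a * (2 / (1 - Complex.I * x)) := by
  have := one_sub_I_ne x
  unfold zx
  field_simp
  ring

theorem zx_ne {a : ℂ} (ha : ‖a‖ = 1) (x : ℝ) : zx a x ≠ a := by
  intro h
  have h1 := a_sub_zx a x
  rw [h, sub_self] at h1
  have h0 : a ≠ 0 := by rintro rfl; simp at ha
  exact mul_ne_zero h0 (div_ne_zero two_ne_zero (one_sub_I_ne x)) h1.symm

theorem conj_mul_self' {a : ℂ} (ha : ‖a‖ = 1) : starRingEnd ℂ a * a = 1 := by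
  rw [mul_comm, Complex.mul_conj, Complex.normSq_eq_norm_sq, ha]; simp

/-- denominators are nonzero -/
theorem den_ne {a : ℂ} (ha : ‖a‖ = 1) (s : ℝ) {z : ℂ} (hz : z ∈ closedBall (0:ℂ) 1) :
    1 + Complex.I * s * (starRingEnd ℂ a * (a - z)) ≠ 0 := by
  have haa := conj_mul_self' ha
  rw [mul_sub, haa]
  set v := starRingEnd ℂ a * z with hv
  have hvn : ‖v‖ ≤ 1 := by simpa [hv, ha] using hz
  intro h
  have hr := congrArg Complex.re h
  have hi := congrArg Complex.im h
  simp at hr hi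
  rcases hi with h0 | h0
  · simp [h0] at hr
  · have h2 : v.re ≤ 1 := (Complex.re_le_norm v).trans hvn
    have h3 : v.re = 1 := by linarith
    have h4 : v.re ^ 2 + v.im ^ 2 ≤ 1 := by
      have := Complex.sq_norm v
      rw [Complex.normSq_apply] at this
      nlinarith [norm_nonneg v]
    have h5 : v.im = 0 := by nlinarith
    simp [h5] at hr

theorem a_sub_Phi (a : ℂ) (s : ℝ) (z : ℂ) :
    a - Phi a s z = (a - z) / (1 + Complex.I * s * (starRingEnd ℂ a * (a - z))) := by
  simp [Phi]

theorem Phi_zx {a : ℂ} (ha : ‖a‖ = 1) (s x : ℝ) : Phi a s (zx a x) = zx a (x - 2 * s) := by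
  have haa := conj_mul_self' ha
  have h : a - Phi a s (zx a x) = a - zx a (x - 2 * s) := by
    have hd := den_ne ha s (zx_mem ha x)
    rw [a_sub_Phi]
    rw [a_sub_zx] at *
    rw [a_sub_zx]
    have h1 := one_sub_I_ne x
    have h2 := one_sub_I_ne (x - 2 * s)
    rw [div_eq_iff hd]
    push_cast at *
    rw [← mul_assoc (starRingEnd ℂ a), haa, one_mul]
    field_simp
    ring
  simpa using h

theorem Phi_key {a : ℂ} (ha : ‖a‖ = 1) (s : ℝ) {z : ℂ} (hz : z ∈ closedBall (0:ℂ) 1) :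
    1 - ‖Phi a s z‖ ^ 2 = (1 - ‖z‖ ^ 2) / ‖1 + Complex.I * s * (starRingEnd ℂ a * (a - z))‖ ^ 2 := by
  have haa := conj_mul_self' ha
  have hd := den_ne ha s hz
  have e : Phi a s z = a * ((starRingEnd ℂ a * z + Complex.I * s * (1 - starRingEnd ℂ a * z)) /
      (1 + Complex.I * s * (1 - starRingEnd ℂ a * z))) := by
    unfold Phi
    rw [mul_sub (starRingEnd ℂ a), haa] at hd ⊢
    obtain ⟨D, hD⟩ : ∃ D, D = 1 + Complex.I * s * (1 - starRingEnd ℂ a * z) := ⟨_, rfl⟩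
    rw [← hD] at hd ⊢
    field_simp
    rw [hD]
    linear_combination (-z) * haa
  rw [e, norm_mul, ha, one_mul, norm_div, mul_sub (starRingEnd ℂ a) a, haa]
  rw [mul_sub (starRingEnd ℂ a), haa] at hd
  have hz2 : ‖z‖ = ‖starRingEnd ℂ a * z‖ := by simp [ha]
  rw [hz2]
  generalize starRingEnd ℂ a * z = v at *
  have : ‖1 + Complex.I * s * (1 - v)‖ ^ 2 ≠ 0 := by simpa using hd
  rw [div_pow]
  field_simp
  simp only [Complex.sq_norm, Complex.normSq_apply]
  simp
  ring

theorem Phi_mem {a : ℂ} (ha : ‖a‖ = 1) (s : ℝ) {z : ℂ} (hz : z ∈ closedBall (0:ℂ) 1) :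
    Phi a s z ∈ closedBall (0:ℂ) 1 := by
  have := Phi_key ha s hz
  have hz' : ‖z‖ ≤ 1 := by simpa using hz
  have h2 : 0 ≤ 1 - ‖Phi a s z‖ ^ 2 := by
    rw [this]
    have : 0 ≤ 1 - ‖z‖^2 := by nlinarith [norm_nonneg z]
    positivity
  simp only [mem_closedBall, dist_zero_right]
  nlinarith [norm_nonneg (Phi a s z)]

theorem Phi_mem' {a : ℂ} (ha : ‖a‖ = 1) (s : ℝ) {z : ℂ} (hz : z ∈ ball (0:ℂ) 1) :
    Phi a s z ∈ ball (0:ℂ) 1 := by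
  have := Phi_key ha s (ball_subset_closedBall hz)
  have hd := den_ne ha s (ball_subset_closedBall hz)
  have hz' : ‖z‖ < 1 := by simpa using hz
  have h2 : 0 < 1 - ‖Phi a s z‖ ^ 2 := by
    rw [this]
    have : 0 < 1 - ‖z‖^2 := by nlinarith [norm_nonneg z]
    positivity
  simp only [mem_ball, dist_zero_right]
  nlinarith [norm_nonneg (Phi a s z)]

theorem Phi_cont {a : ℂ} (ha : ‖a‖ = 1) (s : ℝ) : ContinuousOn (Phi a s) (closedBall 0 1) := by
  unfold Phi
  refine continuousOn_const.sub (ContinuousOn.div (by fun_prop) (by fun_prop) ?_)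
  intro z hz; exact den_ne ha s hz

theorem Phi_diff {a : ℂ} (ha : ‖a‖ = 1) (s : ℝ) : DifferentiableOn ℂ (Phi a s) (ball 0 1) := by
  unfold Phi
  refine (differentiableOn_const _).sub (DifferentiableOn.div (by fun_prop) (by fun_prop) ?_)
  intro z hz; exact den_ne ha s (ball_subset_closedBall hz)

theorem Phi_add {a : ℂ} (ha : ‖a‖ = 1) (s t : ℝ) {z : ℂ} (hz : z ∈ closedBall (0:ℂ) 1) :
    Phi a s (Phi a t z) = Phi a (s + t) z := by
  have h1 := den_ne ha t hz
  have h2 := den_ne ha s (Phi_mem ha t hz)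
  have h3 := den_ne ha (s + t) hz
  have : a - Phi a s (Phi a t z) = a - Phi a (s + t) z := by
    rw [a_sub_Phi a s]
    rw [a_sub_Phi] at *
    rw [a_sub_Phi]
    generalize a - z = w at *
    push_cast at *
    obtain ⟨D, hD⟩ : ∃ D, D = 1 + Complex.I * t * (starRingEnd ℂ a * w) := ⟨_, rfl⟩
    rw [← hD] at h1 h2 ⊢
    have e1 : 1 + Complex.I * s * (starRingEnd ℂ a * (w / D)) =
        (1 + Complex.I * (s + t) * (starRingEnd ℂ a * w)) / D := by
      rw [eq_div_iff h1]
      field_simp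
      rw [hD]; ring
    rw [e1]
    field_simp
  simpa using this

theorem Phi_zero (a z : ℂ) : Phi a 0 z = z := by simp [Phi]

theorem Phi_a (a : ℂ) (s : ℝ) : Phi a s a = a := by simp [Phi]


open MeasureTheory in
theorem integrable_zx {a : ℂ} (ha : ‖a‖ = 1) {f : ℂ → ℂ} (hc : ContinuousOn f (closedBall 0 1)) :
    Integrable fun x : ℝ => (1 + x ^ 2)⁻¹ * ‖f (zx a x)‖ ^ 2 := by
  obtain ⟨C, hC⟩ := (isCompact_closedBall (0:ℂ) 1).exists_bound_of_continuousOn hc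
  refine integrable_inv_one_add_sq.mul_bdd (c := C ^ 2) ?_ ?_
  · exact ((hc.comp_continuous (zx_continuous ha) (zx_mem ha)).norm.pow 2).aestronglyMeasurable
  · refine Eventually.of_forall fun x => ?_
    have := hC _ (zx_mem ha x)
    rw [norm_pow, norm_norm]
    gcongr

open MeasureTheory in
theorem W0 {a : ℂ} (ha : ‖a‖ = 1) (s : ℝ) (ψ : ℂ → ℂ) (hψc : ContinuousOn ψ (closedBall 0 1))
    (hψ : DifferentiableOn ℂ ψ (ball 0 1)) (M : ℝ)
    (hM : ∀ z ∈ closedBall (0:ℂ) 1, ‖ψ z‖ ≤ M) (P : H2) (p : ℂ → ℂ)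
    (hpc : ContinuousOn p (closedBall 0 1)) (hp : DifferentiableOn ℂ p (ball 0 1))
    (hPp : ∀ z ∈ ball (0:ℂ) 1, P.toFun z = p z) :
    ∃ F : H2, (∀ z ∈ ball (0:ℂ) 1, F.toFun z = ψ z * P.toFun (Phi a s z)) ∧
      ‖F‖ ≤ M * √(2 + 8 * s ^ 2) * ‖P‖ := by
  have hM0 : 0 ≤ M := (norm_nonneg _).trans (hM 0 (by simp))
  have hcc : ContinuousOn (fun z => ψ z * p (Phi a s z)) (closedBall 0 1) :=
    hψc.mul (hpc.comp (Phi_cont ha s) fun z hz => Phi_mem ha s hz)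
  obtain ⟨F, h1, h2⟩ := L1' ha (fun z => ψ z * p (Phi a s z)) hcc
    (hψ.mul (hp.comp (Phi_diff ha s) fun z hz => Phi_mem' ha s hz))
  refine ⟨F, fun z hz => by rw [h1 z hz, hPp _ (Phi_mem' ha s hz)], ?_⟩
  have h3 := L1'' ha P p hpc hp hPp
  refine (pow_le_pow_iff_left₀ (norm_nonneg _) (by positivity) two_ne_zero).1 ?_
  rw [h2, mul_pow, mul_pow, Real.sq_sqrt (by positivity), h3]
  have hint := (integrable_zx ha hpc)
  have hint2 := hint.comp_sub_right (2 * s)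
  have hsh := integral_sub_right_eq_self (μ := volume) (fun x : ℝ => (1 + x ^ 2)⁻¹ * ‖p (zx a x)‖ ^ 2) (2 * s)
  rw [← hsh]
  have : ∫ x : ℝ, (1 + x ^ 2)⁻¹ * ‖ψ (zx a x) * p (Phi a s (zx a x))‖ ^ 2 ≤
      ∫ x : ℝ, M ^ 2 * (2 + 8 * s ^ 2) * ((1 + (x - 2 * s) ^ 2)⁻¹ * ‖p (zx a (x - 2 * s))‖ ^ 2) := by
    have hint1 : Integrable fun x : ℝ => (1 + x ^ 2)⁻¹ * ‖ψ (zx a x) * p (Phi a s (zx a x))‖ ^ 2 :=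
      integrable_zx (f := fun z => ψ z * p (Phi a s z)) ha hcc
    have hint3 : Integrable fun x : ℝ => M ^ 2 * (2 + 8 * s ^ 2) *
      ((1 + (x - 2 * s) ^ 2)⁻¹ * ‖p (zx a (x - 2 * s))‖ ^ 2) := hint2.const_mul _
    refine integral_mono hint1 hint3 (fun x => ?_)
    show (1 + x ^ 2)⁻¹ * ‖ψ (zx a x) * p (Phi a s (zx a x))‖ ^ 2 ≤ M ^ 2 * (2 + 8 * s ^ 2) *
      ((1 + (x - 2 * s) ^ 2)⁻¹ * ‖p (zx a (x - 2 * s))‖ ^ 2)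
    rw [Phi_zx ha, norm_mul, mul_pow]
    have e1 : ‖ψ (zx a x)‖ ^ 2 ≤ M ^ 2 := by gcongr; exact hM _ (zx_mem ha x)
    have e2 : (1 + x ^ 2)⁻¹ ≤ (2 + 8 * s ^ 2) * (1 + (x - 2 * s) ^ 2)⁻¹ := by
      rw [← div_eq_mul_inv, le_div_iff₀ (by positivity), inv_mul_le_iff₀ (by positivity)]
      nlinarith [sq_nonneg (x + 2 * s), sq_nonneg (x * s)]
    calc (1 + x ^ 2)⁻¹ * (‖ψ (zx a x)‖ ^ 2 * ‖p (zx a (x - 2 * s))‖ ^ 2)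
        ≤ ((2 + 8 * s ^ 2) * (1 + (x - 2 * s) ^ 2)⁻¹) * (M ^ 2 * ‖p (zx a (x - 2 * s))‖ ^ 2) := by
          gcongr
      _ = _ := by ring
  rw [integral_const_mul] at this
  have hpi := Real.pi_pos
  refine (mul_le_mul_of_nonneg_left this (by positivity : 0 ≤ Real.pi⁻¹)).trans (le_of_eq ?_)
  ring

theorem H2.toFun_single (i : ℕ) (c z : ℂ) : H2.toFun (lp.single 2 i c) z = c * z ^ i := by
  unfold H2.toFun
  rw [tsum_eq_single i]
  · rw [lp.single_apply_self]
  · intro j hj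
    rw [lp.single_apply_ne _ _ _ hj, zero_mul]

theorem H2.toFun_trunc (f : ℕ → ℂ) (N : ℕ) {z : ℂ} (hz : z ∈ ball (0:ℂ) 1) :
    H2.toFun (∑ i ∈ Finset.range N, lp.single 2 i (f i)) z = ∑ i ∈ Finset.range N, f i * z ^ i := by
  induction N with
  | zero => simp [H2.toFun]
  | succ n ih => rw [Finset.sum_range_succ, Finset.sum_range_succ, H2.toFun_add _ _ hz, ih,
      H2.toFun_single]

theorem W1 {a : ℂ} (ha : ‖a‖ = 1) (s : ℝ) (ψ : ℂ → ℂ) (hψc : ContinuousOn ψ (closedBall 0 1))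
    (hψ : DifferentiableOn ℂ ψ (ball 0 1)) (M : ℝ)
    (hM : ∀ z ∈ closedBall (0:ℂ) 1, ‖ψ z‖ ≤ M) (f : H2) :
    ∃ F : H2, (∀ z ∈ ball (0:ℂ) 1, F.toFun z = ψ z * f.toFun (Phi a s z)) ∧
      ‖F‖ ≤ M * √(2 + 8 * s ^ 2) * ‖f‖ := by
  have hM0 : 0 ≤ M := (norm_nonneg _).trans (hM 0 (by simp))
  set C := M * √(2 + 8 * s ^ 2) with hC
  have hC0 : 0 ≤ C := by positivity
  let P : ℕ → H2 := fun N => ∑ i ∈ Finset.range N, lp.single 2 i (f i)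
  let p : ℕ → ℂ → ℂ := fun N z => ∑ i ∈ Finset.range N, f i * z ^ i
  have hPp : ∀ N, ∀ z ∈ ball (0:ℂ) 1, (P N).toFun z = p N z := fun N z hz =>
    H2.toFun_trunc _ N hz
  have hpd : ∀ N, Differentiable ℂ (p N) := fun N => by
    simp only [p]; fun_prop
  have hlim : Tendsto P atTop (nhds f) :=
    (lp.hasSum_single (by norm_num) f).tendsto_sum_nat
  choose F hF1 hF2 using fun N => W0 ha s ψ hψc hψ M hM (P N) (p N) (hpd N).continuous.continuousOn
    (hpd N).differentiableOn (hPp N)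
  have hdiff : ∀ N K, ‖F N - F K‖ ≤ C * ‖P N - P K‖ := by
    intro N K
    obtain ⟨G, h1, h2⟩ := W0 ha s ψ hψc hψ M hM (P N - P K) (fun z => p N z - p K z)
      ((hpd N).sub (hpd K)).continuous.continuousOn ((hpd N).sub (hpd K)).differentiableOn
      (fun z hz => by rw [H2.toFun_sub _ _ hz, hPp N z hz, hPp K z hz])
    have : F N - F K = G := by
      refine H2.ext_toFun fun z hz => ?_
      rw [H2.toFun_sub _ _ hz, h1 z hz, hF1 N z hz, hF1 K z hz, H2.toFun_sub _ _ (Phi_mem' ha s hz)]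
      ring
    rw [this]; exact h2
  have hcau : CauchySeq F := by
    rw [Metric.cauchySeq_iff']
    intro ε hε
    obtain ⟨N, hN⟩ := Metric.cauchySeq_iff'.1 hlim.cauchySeq (ε / (C + 1)) (by positivity)
    refine ⟨N, fun n hn => ?_⟩
    have h1 := hN n hn
    rw [dist_eq_norm, lt_div_iff₀ (by positivity)] at h1
    rw [dist_eq_norm]
    have := hdiff n N
    nlinarith [norm_nonneg (P n - P N)]
  obtain ⟨G, hG⟩ := cauchySeq_tendsto_of_complete hcau
  refine ⟨G, fun z hz => ?_, ?_⟩
  · have t1 := H2.toFun_tendsto hG hz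
    have t2 := (H2.toFun_tendsto hlim (Phi_mem' ha s hz)).const_mul (ψ z)
    refine tendsto_nhds_unique t1 (t2.congr fun n => ?_)
    rw [hF1 n z hz]
  · exact le_of_tendsto_of_tendsto' hG.norm (hlim.norm.const_mul C) hF2

theorem W2 {a : ℂ} (ha : ‖a‖ = 1) (s : ℝ) (ψ : ℂ → ℂ) (hψc : ContinuousOn ψ (closedBall 0 1))
    (hψ : DifferentiableOn ℂ ψ (ball 0 1)) :
    ∃ T : H2 →L[ℂ] H2, ∀ f : H2, ∀ z ∈ ball (0:ℂ) 1, (T f).toFun z = ψ z * f.toFun (Phi a s z) := by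
  obtain ⟨M, hM⟩ := (isCompact_closedBall (0:ℂ) 1).exists_bound_of_continuousOn hψc
  choose F h1 h2 using W1 ha s ψ hψc hψ M hM
  refine ⟨LinearMap.mkContinuous
    { toFun := F
      map_add' := fun f g => ?_
      map_smul' := fun c f => ?_ } _ h2, fun f z hz => h1 f z hz⟩
  · refine H2.ext_toFun fun z hz => ?_
    rw [h1 _ z hz, H2.toFun_add _ _ hz, h1 _ z hz, h1 _ z hz, H2.toFun_add _ _ (Phi_mem' ha s hz)]
    ring
  · refine H2.ext_toFun fun z hz => ?_
    rw [h1 _ z hz, RingHom.id_apply, H2.toFun_smul, H2.toFun_smul, h1 _ z hz]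
    ring

theorem W3 {a : ℂ} (ha : ‖a‖ = 1) (s : ℝ) (ψ : ℂ → ℂ) (hψc : ContinuousOn ψ (closedBall 0 1))
    (hψ : DifferentiableOn ℂ ψ (ball 0 1)) (M : ℝ)
    (hM : ∀ z ∈ closedBall (0:ℂ) 1, ‖ψ z‖ ≤ M) (T : H2 →L[ℂ] H2)
    (hT : ∀ f : H2, ∀ z ∈ ball (0:ℂ) 1, (T f).toFun z = ψ z * f.toFun (Phi a s z)) :
    ‖T‖ ≤ M * √(2 + 8 * s ^ 2) := by
  have hM0 : 0 ≤ M := (norm_nonneg _).trans (hM 0 (by simp))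
  refine T.opNorm_le_bound (by positivity) fun f => ?_
  obtain ⟨F, h1, h2⟩ := W1 ha s ψ hψc hψ M hM f
  have : T f = F := H2.ext_toFun fun z hz => by rw [hT f z hz, h1 z hz]
  rw [this]; exact h2

/-- iterated weight -/
noncomputable def wt (a : ℂ) (s : ℝ) (ψ : ℂ → ℂ) (n : ℕ) (z : ℂ) : ℂ :=
  ∏ j ∈ Finset.range n, ψ (Phi a (j * s) z)

theorem T_pow {a : ℂ} (ha : ‖a‖ = 1) (s : ℝ) (ψ : ℂ → ℂ) (T : H2 →L[ℂ] H2)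
    (hT : ∀ f : H2, ∀ z ∈ ball (0:ℂ) 1, (T f).toFun z = ψ z * f.toFun (Phi a s z)) (n : ℕ) :
    ∀ f : H2, ∀ z ∈ ball (0:ℂ) 1, ((T ^ n) f).toFun z = wt a s ψ n z * f.toFun (Phi a (n * s) z) := by
  induction n with
  | zero => intro f z hz; simp [wt, Phi_zero]
  | succ n ih =>
    intro f z hz
    rw [pow_succ, mul_apply_eq_comp, ih _ z hz, hT _ _ (Phi_mem' ha _ hz),
      Phi_add ha _ _ (ball_subset_closedBall hz), wt, wt, Finset.prod_range_succ]
    have : s + n * s = ((n + 1 : ℕ) : ℝ) * s := by push_cast; ring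
    rw [this]; ring

theorem count_le (y s R : ℝ) (hs : s ≠ 0) (S : Finset ℕ) (hS : ∀ j ∈ S, |y + j * s| ≤ R) :
    S.card ≤ ⌊2 * R / |s|⌋₊ + 1 := by
  rcases S.eq_empty_or_nonempty with rfl | hne
  · simp
  have hs' : 0 < |s| := abs_pos.2 hs
  have hsub : S ⊆ Finset.Icc (S.min' hne) (S.min' hne + ⌊2 * R / |s|⌋₊) := by
    intro j hj
    have h1 := S.min'_le j hj
    rw [Finset.mem_Icc]
    refine ⟨h1, ?_⟩
    have h2 := hS _ (S.min'_mem hne)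
    have h3 := hS _ hj
    set m := S.min' hne
    have h4 : j - m ≤ ⌊2 * R / |s|⌋₊ := by
      apply Nat.le_floor
      rw [le_div_iff₀ hs', Nat.cast_sub h1]
      have : ((j:ℝ) - m) * |s| = |(y + j * s) - (y + m * s)| := by
        rw [show (y + j * s) - (y + m * s) = ((j:ℝ) - m) * s by ring, abs_mul,
          abs_of_nonneg (a := (j:ℝ) - m) (by simpa using h1)]
      rw [this]
      exact (abs_sub _ _).trans (by linarith)
    omega
  refine (Finset.card_le_card hsub).trans ?_
  simp
  omega

theorem wt_bound {a : ℂ} (ha : ‖a‖ = 1) (s : ℝ) (hs : s ≠ 0) (ψ : ℂ → ℂ)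
    (hψc : ContinuousOn ψ (closedBall 0 1)) (ρ : ℝ) (hρ : ‖ψ a‖ < ρ) :
    ∃ C : ℝ, ∀ n : ℕ, ∀ z ∈ closedBall (0:ℂ) 1, ‖wt a s ψ n z‖ ≤ C * ρ ^ n := by
  have hρ0 : 0 < ρ := (norm_nonneg _).trans_lt hρ
  obtain ⟨M, hM⟩ := (isCompact_closedBall (0:ℂ) 1).exists_bound_of_continuousOn hψc
  have ham : a ∈ closedBall (0:ℂ) 1 := by simp [ha]
  obtain ⟨δ, hδ, hδ2⟩ : ∃ δ > 0, ∀ z ∈ closedBall (0:ℂ) 1, ‖a - z‖ < δ → ‖ψ z‖ ≤ ρ := by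
    have h1 : ∀ᶠ z in nhdsWithin a (closedBall (0:ℂ) 1), ‖ψ z‖ < ρ :=
      (hψc a ham).norm.eventually (gt_mem_nhds hρ)
    rw [eventually_iff, Metric.mem_nhdsWithin_iff] at h1
    obtain ⟨δ, hδ, h⟩ := h1
    refine ⟨δ, hδ, fun z hz hza => (h ⟨?_, hz⟩).le⟩
    rw [mem_ball, dist_comm, dist_eq_norm]; exact hza
  set K := max M ρ with hK
  have hKρ : 1 ≤ K / ρ := by rw [le_div_iff₀ hρ0]; simp [hK]
  set N := ⌊2 * (1 / δ) / |s|⌋₊ + 1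
  refine ⟨(K / ρ) ^ N, fun n z hz => ?_⟩
  classical
  set S := (Finset.range n).filter (fun j : ℕ => δ ≤ ‖a - Phi a (j * s) z‖) with hSdef
  have hcard : S.card ≤ N := by
    by_cases hza : z = a
    · have : S = ∅ := by
        rw [hSdef, Finset.filter_eq_empty_iff]
        intro j _
        rw [hza, Phi_a]; simpa using hδ
      rw [this]; simp
    · set q := a / (a - z)
      refine count_le q.im s (1 / δ) hs S fun j hj => ?_
      have h1 := (Finset.mem_filter.1 hj).2
      have h0 : a - z ≠ 0 := sub_ne_zero.2 (Ne.symm hza)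
      have hd := den_ne ha (j * s) hz
      have e : q + Complex.I * ((j * s : ℝ) : ℂ) = a * (a - Phi a (j * s) z)⁻¹ := by
        have haa := conj_mul_self' ha
        rw [a_sub_Phi, inv_div, ← mul_div_assoc, eq_div_iff h0, add_mul, div_mul_cancel₀ _ h0]
        linear_combination (-(Complex.I * ((j * s : ℝ) : ℂ)) * (a - z)) * haa
      have e2 : (q.im + j * s) = (q + Complex.I * ((j * s : ℝ) : ℂ)).im := by simp
      rw [e2]
      refine (Complex.abs_im_le_norm _).trans ?_
      rw [e, norm_mul, ha, one_mul, norm_inv, one_div]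
      gcongr
  have hfac : ∀ j ∈ Finset.range n, ‖ψ (Phi a (j * s) z)‖ ≤ ρ * (if δ ≤ ‖a - Phi a (j * s) z‖ then K / ρ else 1) := by
    intro j _
    have hm := Phi_mem ha (j * s) hz
    split_ifs with h
    · rw [mul_div_cancel₀ _ hρ0.ne']
      exact (hM _ hm).trans (le_max_left _ _)
    · rw [mul_one]; exact hδ2 _ hm (not_le.1 h)
  rw [wt, norm_prod]
  refine (Finset.prod_le_prod (fun _ _ => norm_nonneg _) hfac).trans ?_
  rw [Finset.prod_mul_distrib, Finset.prod_const, Finset.card_range, ← Finset.prod_filter,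
    Finset.prod_const, mul_comm]
  gcongr

theorem wt_cont {a : ℂ} (ha : ‖a‖ = 1) (s : ℝ) (ψ : ℂ → ℂ)
    (hψc : ContinuousOn ψ (closedBall 0 1)) (n : ℕ) : ContinuousOn (wt a s ψ n) (closedBall 0 1) := by
  unfold wt
  exact continuousOn_finsetProd _ fun j _ => hψc.comp (Phi_cont ha _) fun z hz => Phi_mem ha _ hz

theorem wt_diff {a : ℂ} (ha : ‖a‖ = 1) (s : ℝ) (ψ : ℂ → ℂ)
    (hψ : DifferentiableOn ℂ ψ (ball 0 1)) (n : ℕ) : DifferentiableOn ℂ (wt a s ψ n) (ball 0 1) := by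
  unfold wt
  exact DifferentiableOn.fun_finsetProd fun j _ => hψ.comp (Phi_diff ha _) fun z hz => Phi_mem' ha _ hz

theorem spec_le {a : ℂ} (ha : ‖a‖ = 1) (s : ℝ) (hs : s ≠ 0) (ψ : ℂ → ℂ)
    (hψc : ContinuousOn ψ (closedBall 0 1))
    (hψ : DifferentiableOn ℂ ψ (ball 0 1)) (T : H2 →L[ℂ] H2)
    (hT : ∀ f : H2, ∀ z ∈ ball (0:ℂ) 1, (T f).toFun z = ψ z * f.toFun (Phi a s z))
    (lam : ℂ) (hl : lam ∈ spectrum ℂ T) : ‖lam‖ ≤ ‖ψ a‖ := by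
  by_contra! hlt
  obtain ⟨ρ, h1, h2⟩ := exists_between hlt
  have hρ0 : 0 < ρ := (norm_nonneg _).trans_lt h1
  have hl0 : 0 < ‖lam‖ := hρ0.trans h2
  obtain ⟨C, hC⟩ := wt_bound ha s hs ψ hψc ρ h1
  have hC0 : 0 ≤ C := by
    have := (norm_nonneg _).trans (hC 0 0 (by simp)); simpa using this
  have hb : ∀ n : ℕ, 1 ≤ C * (2 * (1 + 2 * |s|)) * (((n:ℝ) + 1) * (ρ / ‖lam‖) ^ n) := by
    intro n
    have e1 : lam ^ n ∈ spectrum ℂ (T ^ n) := spectrum.pow_mem_pow T n hl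
    have e2 := spectrum.norm_le_norm_mul_of_mem e1
    have e3 := W3 ha (n * s) (wt a s ψ n) (wt_cont ha s ψ hψc n) (wt_diff ha s ψ hψ n) _ (hC n)
      (T ^ n) (T_pow ha s ψ T hT n)
    have e4 : √(2 + 8 * (n * s) ^ 2) ≤ 2 * (1 + 2 * |s|) * (n + 1) := by
      rw [Real.sqrt_le_left (by positivity)]
      have : (n * s) ^ 2 = n ^ 2 * |s| ^ 2 := by rw [mul_pow, sq_abs]
      rw [this]
      have hn : (0:ℝ) ≤ n := Nat.cast_nonneg n
      have hs0 := abs_nonneg s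
      have k1 : 0 ≤ |s| * n := by positivity
      have k2 : 2 * (1 + 2 * |s|) * (n + 1) ≥ 2 + 4 * (|s| * n) := by nlinarith
      nlinarith
    have e5 : ‖(1 : H2 →L[ℂ] H2)‖ ≤ 1 := ContinuousLinearMap.norm_id_le
    have e6 : ‖lam‖ ^ n ≤ C * ρ ^ n * (2 * (1 + 2 * |s|) * (n + 1)) := by
      rw [norm_pow] at e2
      calc ‖lam‖ ^ n ≤ ‖T ^ n‖ * ‖(1 : H2 →L[ℂ] H2)‖ := e2
        _ ≤ ‖T ^ n‖ * 1 := by gcongr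
        _ = ‖T ^ n‖ := mul_one _
        _ ≤ C * ρ ^ n * √(2 + 8 * (n * s) ^ 2) := e3
        _ ≤ _ := by gcongr
    rw [div_pow, ← mul_div_assoc, ← mul_div_assoc, le_div_iff₀ (by positivity), one_mul]
    linarith
  have hr : |ρ / ‖lam‖| < 1 := by
    rw [abs_of_pos (by positivity), div_lt_one hl0]; exact h2
  have t1 := tendsto_self_mul_const_pow_of_abs_lt_one hr
  have t2 := tendsto_pow_atTop_nhds_zero_of_abs_lt_one hr
  have t3 := ((t1.add t2).const_mul (C * (2 * (1 + 2 * |s|))))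
  rw [add_zero, mul_zero] at t3
  have := ge_of_tendsto' t3 (b := (1:ℝ)) fun n => by
    have := hb n
    rw [add_mul, one_mul] at this
    exact this
  linarith


theorem mob_den {b z : ℂ} (hb : ‖b‖ < 1) (hz : ‖z‖ ≤ 1) : 1 + starRingEnd ℂ b * z ≠ 0 := by
  intro h
  have h1 : starRingEnd ℂ b * z = -1 := by linear_combination h
  have h2 := congrArg norm h1
  rw [norm_mul, RCLike.norm_conj, norm_neg, norm_one] at h2
  nlinarith [norm_nonneg b, norm_nonneg z]

/-- disc automorphism -/
noncomputable def mob (b z : ℂ) : ℂ := (z + b) / (1 + starRingEnd ℂ b * z)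

theorem mob_mem {b : ℂ} (hb : ‖b‖ < 1) : Set.MapsTo (mob b) (ball 0 1) (ball 0 1) := by
  intro z hz
  have hz' : ‖z‖ < 1 := by simpa using hz
  have hd := mob_den hb hz'.le
  rw [mem_ball_zero_iff, mob, norm_div, div_lt_one (norm_pos_iff.2 hd)]
  refine (pow_lt_pow_iff_left₀ (norm_nonneg _) (norm_nonneg _) two_ne_zero).1 ?_
  have e : ‖1 + starRingEnd ℂ b * z‖ ^ 2 - ‖z + b‖ ^ 2 = (1 - ‖b‖ ^ 2) * (1 - ‖z‖ ^ 2) := by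
    simp only [Complex.sq_norm, Complex.normSq_apply]
    simp
    ring
  have h1 : 0 < 1 - ‖b‖ ^ 2 := by nlinarith [norm_nonneg b]
  have h2 : 0 < 1 - ‖z‖ ^ 2 := by nlinarith [norm_nonneg z]
  nlinarith [mul_pos h1 h2]

theorem mob_diff {b : ℂ} (hb : ‖b‖ < 1) : DifferentiableOn ℂ (mob b) (ball 0 1) := by
  unfold mob
  refine DifferentiableOn.div (by fun_prop) (by fun_prop) fun z hz => ?_
  exact mob_den hb (by simpa using (mem_ball_zero_iff.1 hz).le)

theorem mob_inv {b : ℂ} (hb : ‖b‖ < 1) {z : ℂ} (hz : z ∈ ball (0:ℂ) 1) : mob (-b) (mob b z) = z := by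
  have hz' : ‖z‖ < 1 := by simpa using hz
  have h1 := mob_den hb hz'.le
  have h2 := mob_den (b := -b) (z := mob b z) (by simpa using hb)
    (by simpa using (mem_ball_zero_iff.1 (mob_mem hb hz)).le)
  unfold mob at *
  rw [map_neg] at *
  rw [div_eq_iff h2]
  obtain ⟨D, hD⟩ : ∃ D, D = 1 + starRingEnd ℂ b * z := ⟨_, rfl⟩
  rw [← hD] at h1 h2 ⊢
  field_simp
  rw [hD]; ring

theorem classify (φ φinv : ℂ → ℂ)
    (hφc : ContinuousOn φ (closedBall 0 1))
    (hφ : DifferentiableOn ℂ φ (ball 0 1))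
    (hφinv : DifferentiableOn ℂ φinv (ball 0 1))
    (hφm : Set.MapsTo φ (ball 0 1) (ball 0 1))
    (hφinvm : Set.MapsTo φinv (ball 0 1) (ball 0 1))
    (hleft : ∀ z ∈ ball (0 : ℂ) 1, φinv (φ z) = z)
    (hright : ∀ z ∈ ball (0 : ℂ) 1, φ (φinv z) = z) :
    ∃ b c : ℂ, ‖b‖ < 1 ∧ ‖c‖ = 1 ∧ ∀ z ∈ closedBall (0:ℂ) 1,
      φ z * (1 - starRingEnd ℂ b * z) = c * (z - b) := by
  have h0 : (0:ℂ) ∈ ball (0:ℂ) 1 := by simp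
  set b := φinv 0 with hbdef
  have hbm : b ∈ ball (0:ℂ) 1 := hφinvm h0
  have hb : ‖b‖ < 1 := by simpa using hbm
  have hb' : ‖-b‖ < 1 := by simpa using hb
  have hmb0 : mob b 0 = b := by simp [mob]
  have hmbb : mob (-b) b = 0 := by simp [mob]
  set g := φ ∘ mob b with hg
  set h := mob (-b) ∘ φinv with hh
  have hg0 : g 0 = 0 := by simp only [hg, Function.comp, hmb0]; exact hright 0 h0
  have hh0 : h 0 = 0 := by simp only [hh, Function.comp]; exact hmbb
  have hgd : DifferentiableOn ℂ g (ball 0 1) := hφ.comp (mob_diff hb) (mob_mem hb)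
  have hhd : DifferentiableOn ℂ h (ball 0 1) := (mob_diff hb').comp hφinv hφinvm
  have hgm : Set.MapsTo g (ball 0 1) (ball 0 1) := hφm.comp (mob_mem hb)
  have hhm : Set.MapsTo h (ball 0 1) (ball 0 1) := (mob_mem hb').comp hφinvm
  have hhg : ∀ z ∈ ball (0:ℂ) 1, h (g z) = z := by
    intro z hz
    simp only [hg, hh, Function.comp]
    rw [hleft _ (mob_mem hb hz), mob_inv hb hz]
  have hnorm : ∀ z ∈ ball (0:ℂ) 1, ‖g z‖ = ‖z‖ := by
    intro z hz
    apply le_antisymm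
    · exact Complex.norm_le_norm_of_mapsTo_ball hgd (hgm.mono_right ball_subset_closedBall) hg0
        (by simpa using hz)
    · have := Complex.norm_le_norm_of_mapsTo_ball hhd (hhm.mono_right ball_subset_closedBall) hh0
        (z := g z) (by simpa using hgm hz)
      rwa [hhg z hz] at this
  have hhalf : (1/2 : ℂ) ∈ ball (0:ℂ) 1 := by simp; norm_num
  obtain ⟨c, hc1, hc2⟩ := Complex.affine_of_mapsTo_ball_of_exists_norm_dslope_eq_div'
    (R₂ := 1) hgd (by rw [hg0]; exact hgm.mono_right ball_subset_closedBall)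
    ⟨1/2, hhalf, by
      rw [dslope_of_ne _ (by norm_num), slope_def_module, hg0, sub_zero, sub_zero, norm_smul,
        hnorm _ hhalf]
      simp⟩
  refine ⟨b, c, hb, by simpa using hc1, ?_⟩
  have hball : Set.EqOn (fun z => φ z * (1 - starRingEnd ℂ b * z)) (fun z => c * (z - b)) (ball 0 1) := by
    intro z hz
    have hz' : ‖z‖ < 1 := by simpa using hz
    have e1 : mob b (mob (-b) z) = z := by
      have := mob_inv hb' hz
      rwa [neg_neg] at this
    have e2 := hc2 (mob_mem hb' hz)
    simp only [hg, Function.comp, e1] at e2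
    have e3 : φ b = 0 := hright 0 h0
    rw [hmb0, e3] at e2
    have hd := mob_den hb' hz'.le
    simp only
    rw [e2]
    unfold mob
    rw [map_neg] at *
    have hd' : 1 - starRingEnd ℂ b * z ≠ 0 := by
      intro hx; apply hd; linear_combination hx
    have : 1 + -starRingEnd ℂ b * z = 1 - starRingEnd ℂ b * z := by ring
    rw [this, smul_eq_mul, zero_add, sub_zero, mul_right_comm, div_mul_cancel₀ _ hd']
    ring
  have hcl := hball.of_subset_closure (s := ball (0:ℂ) 1) (t := closedBall (0:ℂ) 1)
    (hφc.mul (by fun_prop)) (by fun_prop) ball_subset_closedBall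
    (by rw [closure_ball _ one_ne_zero])
  exact fun z hz => hcl hz

theorem parabolic (φ : ℂ → ℂ) (b c : ℂ) (hb : ‖b‖ < 1) (hc : ‖c‖ = 1)
    (h : ∀ z ∈ closedBall (0:ℂ) 1, φ z * (1 - starRingEnd ℂ b * z) = c * (z - b))
    (a : ℂ) (ha : ‖a‖ = 1) (hfix : φ a = a)
    (honly : ∀ z ∈ closedBall (0 : ℂ) 1, φ z = z → z = a) :
    ∃ s : ℝ, s ≠ 0 ∧ ∀ z ∈ closedBall (0:ℂ) 1, φ z = Phi a s z := by
  have ham : a ∈ closedBall (0:ℂ) 1 := by simp [ha]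
  have ha0 : a ≠ 0 := by rintro rfl; simp at ha
  have haa := conj_mul_self' ha
  have hden : ∀ z ∈ closedBall (0:ℂ) 1, 1 - starRingEnd ℂ b * z ≠ 0 := by
    intro z hz hx
    refine mob_den (b := -b) (z := z) (by simpa using hb) (by simpa using hz) ?_
    rw [map_neg]; linear_combination hx
  have hb0 : b ≠ 0 := by
    rintro rfl
    have h1 := h 0 (by simp)
    simp at h1
    exact ha0 (honly 0 (by simp) h1).symm
  have hB0 : starRingEnd ℂ b ≠ 0 := by simpa using hb0
  have hA := h a ham
  rw [hfix] at hA
  obtain ⟨B, hB⟩ : ∃ B, B = starRingEnd ℂ b := ⟨_, rfl⟩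
  have hBn : ‖B‖ = ‖b‖ := by rw [hB]; simp
  simp only [← hB] at h hden hB0 hA
  set a' := (1 - c) / B - a with ha'
  have haa' : a * a' * B = -c * b := by
    rw [ha']; field_simp; linear_combination hA
  have ha'n : ‖a'‖ = 1 := by
    have := congrArg norm haa'
    rw [norm_mul, norm_mul, ha, one_mul, norm_mul, norm_neg, hc, one_mul, hBn] at this
    have hbn : ‖b‖ ≠ 0 := by simpa using hb0
    exact (mul_eq_right₀ hbn).1 this
  have ha'm : a' ∈ closedBall (0:ℂ) 1 := by simp [ha'n]
  have hca : (a + a') * B = 1 - c := by rw [ha']; field_simp; ring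
  clear_value a'
  have ha'a : a' = a := by
    refine honly a' ha'm ?_
    refine mul_right_cancel₀ (hden a' ha'm) ?_
    rw [h a' ha'm]
    linear_combination a' * hca - haa'
  rw [ha'a] at hca haa'
  obtain ⟨v, hv⟩ : ∃ v, v = a * B := ⟨_, rfl⟩
  have hcv : c = 1 - 2 * v := by rw [hv]; linear_combination hca
  have hvn : ‖v‖ < 1 := by rw [hv, norm_mul, ha, one_mul, hBn]; exact hb
  have hv0 : v ≠ 0 := by rw [hv]; exact mul_ne_zero ha0 hB0
  have hvre : v.re < 1 := (Complex.re_le_norm v).trans_lt hvn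
  have hvc : v.re ^ 2 + v.im ^ 2 = v.re := by
    have h1 : ‖c‖ ^ 2 = 1 := by rw [hc]; norm_num
    rw [hcv, Complex.sq_norm, Complex.normSq_apply] at h1
    simp at h1
    nlinarith
  have hx : (1 - v.re) ≠ 0 := by linarith
  have hvim : v.im ≠ 0 := by
    intro h0
    rw [h0] at hvc
    have : v.re = 0 := by
      have : v.re * (1 - v.re) = 0 := by nlinarith
      rcases mul_eq_zero.1 this with h | h
      · exact h
      · exact absurd h hx
    exact hv0 (Complex.ext this h0)
  obtain ⟨s, hsd⟩ : ∃ s : ℝ, s = v.im / (1 - v.re) := ⟨_, rfl⟩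
  have hs0 : s ≠ 0 := by rw [hsd]; exact div_ne_zero hvim hx
  have hsm : s * (1 - v.re) = v.im := by rw [hsd]; field_simp
  have hsi : s * v.im = v.re := by
    refine mul_right_cancel₀ hx ?_
    linear_combination v.im * hsm + hvc
  refine ⟨s, hs0, fun z hz => ?_⟩
  have hs : Complex.I * (s : ℂ) * (1 - v) = v := by
    apply Complex.ext
    · simp
      linarith
    · simp
      linarith
  have hv1 : 1 - v ≠ 0 := by
    intro h0
    have := congrArg Complex.re h0
    simp at this
    exact hx this
  have hd := den_ne ha s hz
  have hD : (1 - v) * (1 + Complex.I * s * (starRingEnd ℂ a * (a - z))) = 1 - B * z := by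
    have : v * starRingEnd ℂ a = B := by rw [hv]; linear_combination B * haa
    linear_combination (starRingEnd ℂ a * (a - z)) * hs + v * haa - z * this
  have : a - φ z = a - Phi a s z := by
    rw [a_sub_Phi, eq_div_iff hd]
    refine mul_left_cancel₀ hv1 ?_
    have hz' := h z hz
    have e1 : (a - φ z) * (1 - B * z) = (1 - v) * (a - z) := by
      have : c * b = -(a * v) := by rw [hv]; linear_combination haa'
      linear_combination (-1 : ℂ) * hz' + this - z * hcv + z * hv
    rw [← e1, ← hD]; ring
  simpa using this


/-- test functions -/
noncomputable def tf (a : ℂ) (σ Y : ℝ) (z : ℂ) : ℂ :=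
  Complex.exp (-σ * ((a + z) / (a - z))) * (2 * a * (a - z) / ((Y + 1) * a - (Y - 1) * z) ^ 2)

theorem tf_den {a : ℂ} (ha : ‖a‖ = 1) {Y : ℝ} (hY : 1 ≤ Y) {z : ℂ} (hz : z ∈ closedBall (0:ℂ) 1) :
    ((Y:ℂ) + 1) * a - (Y - 1) * z ≠ 0 := by
  have hz' : ‖z‖ ≤ 1 := by simpa using hz
  intro h
  have h1 : ((Y:ℂ) + 1) * a = (Y - 1) * z := by linear_combination h
  have h2 := congrArg norm h1
  have e1 : ((Y:ℂ) + 1) = ((Y + 1 : ℝ) : ℂ) := by push_cast; ring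
  have e2 : ((Y:ℂ) - 1) = ((Y - 1 : ℝ) : ℂ) := by push_cast; ring
  rw [norm_mul, norm_mul, e1, e2, Complex.norm_real, Complex.norm_real, Real.norm_of_nonneg (by linarith),
    Real.norm_of_nonneg (by linarith), ha] at h2
  nlinarith

theorem tf_exp {a : ℂ} (ha : ‖a‖ = 1) {σ : ℝ} (hσ : 0 ≤ σ) {z : ℂ} (hz : z ∈ closedBall (0:ℂ) 1) :
    ‖Complex.exp (-σ * ((a + z) / (a - z)))‖ ≤ 1 := by
  have hz' : ‖z‖ ≤ 1 := by simpa using hz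
  rw [Complex.norm_exp, Real.exp_le_one_iff]
  have h1 : 0 ≤ ((a + z) / (a - z)).re := by
    rw [Complex.div_re, ← add_div]
    refine div_nonneg ?_ (Complex.normSq_nonneg _)
    have e1 : a.re * a.re + a.im * a.im = 1 := by
      rw [← Complex.normSq_apply, ← Complex.sq_norm, ha]; norm_num
    have e2 : z.re * z.re + z.im * z.im ≤ 1 := by
      rw [← Complex.normSq_apply, ← Complex.sq_norm]; nlinarith [norm_nonneg z]
    simp
    nlinarith
  have : (-σ * ((a + z) / (a - z)) : ℂ) = ((-σ : ℝ) : ℂ) * ((a + z) / (a - z)) := by push_cast; ring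
  rw [this, Complex.re_ofReal_mul]
  nlinarith

theorem tf_cont {a : ℂ} (ha : ‖a‖ = 1) {σ Y : ℝ} (hσ : 0 ≤ σ) (hY : 1 ≤ Y) :
    ContinuousOn (tf a σ Y) (closedBall 0 1) := by
  intro z hz
  have hd := tf_den ha hY hz
  have hq : ContinuousAt (fun z => 2 * a * (a - z) / (((Y:ℂ) + 1) * a - (Y - 1) * z) ^ 2) z :=
    ContinuousAt.div (by fun_prop) (by fun_prop) (pow_ne_zero 2 hd)
  by_cases hza : z = a
  · subst hza
    have h0 : tf z σ Y z = 0 := by simp [tf]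
    unfold ContinuousWithinAt
    rw [h0]
    have hq' := hq.tendsto.norm
    simp only [sub_self, mul_zero, zero_div, norm_zero] at hq'
    refine squeeze_zero_norm' ?_ (hq'.mono_left nhdsWithin_le_nhds)
    filter_upwards [self_mem_nhdsWithin] with w hw
    unfold tf
    rw [norm_mul]
    exact mul_le_of_le_one_left (norm_nonneg _) (tf_exp ha hσ hw)
  · have hne : a - z ≠ 0 := sub_ne_zero.2 (Ne.symm hza)
    unfold tf
    refine ContinuousAt.continuousWithinAt (ContinuousAt.mul ?_ hq)
    refine ContinuousAt.cexp (ContinuousAt.mul (by fun_prop) (ContinuousAt.div (by fun_prop) (by fun_prop) hne))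

theorem tf_diff {a : ℂ} (ha : ‖a‖ = 1) {σ Y : ℝ} (hY : 1 ≤ Y) :
    DifferentiableOn ℂ (tf a σ Y) (ball 0 1) := by
  intro z hz
  have hd := tf_den ha hY (ball_subset_closedBall hz)
  have hne : a - z ≠ 0 := by
    intro h
    have : z = a := by linear_combination -h
    rw [this, mem_ball_zero_iff, ha] at hz
    exact lt_irrefl _ hz
  unfold tf
  refine DifferentiableAt.differentiableWithinAt (DifferentiableAt.mul ?_ ?_)
  · exact DifferentiableAt.cexp (DifferentiableAt.mul (by fun_prop) (DifferentiableAt.div (by fun_prop) (by fun_prop) hne))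
  · exact DifferentiableAt.div (by fun_prop) (by fun_prop) (pow_ne_zero 2 hd)

theorem Y_sub_I_ne {Y : ℝ} (hY : 1 ≤ Y) (x : ℝ) : (Y - Complex.I * x : ℂ) ≠ 0 := by
  intro h
  have := congrArg Complex.re h
  simp at this
  linarith

theorem Y_norm (Y x : ℝ) : ‖(Y - Complex.I * x : ℂ)‖ ^ 2 = Y ^ 2 + x ^ 2 := by
  rw [Complex.sq_norm, Complex.normSq_apply]; simp; ring

theorem Y_le_norm {Y : ℝ} (x : ℝ) : Y ≤ ‖(Y - Complex.I * x : ℂ)‖ := by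
  have := Complex.re_le_norm (Y - Complex.I * x : ℂ)
  simpa using this

theorem x_le_norm (Y x : ℝ) : |x| ≤ ‖(Y - Complex.I * x : ℂ)‖ := by
  have := Complex.abs_im_le_norm (Y - Complex.I * x : ℂ)
  simpa using this

theorem tf_zx {a : ℂ} (ha : ‖a‖ = 1) {σ Y : ℝ} (hY : 1 ≤ Y) (x : ℝ) :
    tf a σ Y (zx a x) = Complex.exp (Complex.I * σ * x) *
      ((1 - Complex.I * x) / (Y - Complex.I * x) ^ 2) := by
  have ha0 : a ≠ 0 := by rintro rfl; simp at ha
  have h1 := one_sub_I_ne x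
  have h2 := Y_sub_I_ne hY x
  have e1 : (a + zx a x) / (a - zx a x) = -(Complex.I * x) := by
    rw [a_sub_zx]; unfold zx; field_simp; ring
  have e2 : ((Y:ℂ) + 1) * a - (Y - 1) * zx a x = 2 * a * ((Y - Complex.I * x) / (1 - Complex.I * x)) := by
    unfold zx; field_simp; ring
  unfold tf
  rw [e1, e2, a_sub_zx]
  congr 1
  · congr 1; ring
  · field_simp

/-- ratio -/
noncomputable def Rr (τ Y x : ℝ) : ℂ := (1 + 2 * Complex.I * τ / (1 - Complex.I * x)) *
  (1 - 2 * Complex.I * τ / (Y - Complex.I * (x - 2 * τ : ℝ))) ^ 2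

theorem I_norm (τ : ℝ) : ‖2 * Complex.I * (τ:ℂ)‖ = 2 * |τ| := by simp

theorem Rr_bound (τ : ℝ) {Y : ℝ} (hY : 1 ≤ Y) (x : ℝ) : ‖Rr τ Y x‖ ≤ (1 + 2 * |τ|) ^ 3 := by
  have h0 : 0 ≤ |τ| := abs_nonneg _
  have e1 : ‖2 * Complex.I * τ / (1 - Complex.I * x)‖ ≤ 2 * |τ| := by
    rw [norm_div, I_norm]
    refine div_le_self (by positivity) ?_
    simpa using Y_le_norm (Y := 1) x
  have e2 : ‖2 * Complex.I * τ / (Y - Complex.I * (x - 2 * τ : ℝ))‖ ≤ 2 * |τ| := by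
    rw [norm_div, I_norm]
    exact div_le_self (by positivity) (hY.trans (Y_le_norm _))
  unfold Rr
  rw [norm_mul, norm_pow]
  calc _ ≤ (1 + 2 * |τ|) * (1 + 2 * |τ|) ^ 2 := by
        gcongr
        · refine (norm_add_le _ _).trans ?_
          rw [norm_one]; linarith
        · refine (norm_sub_le _ _).trans ?_
          rw [norm_one]; linarith
    _ = _ := by ring

theorem resid {a : ℂ} (ha : ‖a‖ = 1) {σ Y τ : ℝ} (hY : 1 ≤ Y) (p q : ℂ) (x : ℝ) :
    (1 + x ^ 2)⁻¹ * ‖p * tf a σ Y (zx a (x - 2 * τ)) -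
      q * Complex.exp (-(2 * Complex.I * σ * τ)) * tf a σ Y (zx a x)‖ ^ 2 =
      ((Y ^ 2 + x ^ 2)⁻¹) ^ 2 * ‖p * Rr τ Y x - q‖ ^ 2 := by
  have h1 := one_sub_I_ne x
  have h2 := Y_sub_I_ne hY x
  have h3 := Y_sub_I_ne hY (x - 2 * τ)
  have e : p * tf a σ Y (zx a (x - 2 * τ)) -
      q * Complex.exp (-(2 * Complex.I * σ * τ)) * tf a σ Y (zx a x) =
      (Complex.exp ((-(2 * σ * τ) + σ * x : ℝ) * Complex.I)) * ((1 - Complex.I * x) / (Y - Complex.I * x) ^ 2)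
        * (p * Rr τ Y x - q) := by
    have x1 : Complex.exp (Complex.I * σ * (x - 2 * τ : ℝ)) = Complex.exp ((-(2 * σ * τ) + σ * x : ℝ) * Complex.I) := by
      congr 1; push_cast; ring
    have x2 : Complex.exp (-(2 * Complex.I * σ * τ)) * Complex.exp (Complex.I * σ * x) = Complex.exp ((-(2 * σ * τ) + σ * x : ℝ) * Complex.I) := by
      rw [← Complex.exp_add]; congr 1; push_cast; ring
    rw [tf_zx ha hY, tf_zx ha hY, x1]
    have hR : (1 - Complex.I * (x - 2 * τ : ℝ)) / (Y - Complex.I * (x - 2 * τ : ℝ)) ^ 2 =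
      (1 - Complex.I * x) / (Y - Complex.I * x) ^ 2 * Rr τ Y x := by
      have y1 : 1 + 2 * Complex.I * τ / (1 - Complex.I * x) = (1 - Complex.I * (x - 2 * τ : ℝ)) / (1 - Complex.I * x) := by
        field_simp; push_cast; ring
      have y2 : 1 - 2 * Complex.I * τ / (Y - Complex.I * (x - 2 * τ : ℝ)) = (Y - Complex.I * x) / (Y - Complex.I * (x - 2 * τ : ℝ)) := by
        rw [eq_div_iff h3, sub_mul, div_mul_cancel₀ _ h3]; push_cast; ring
      unfold Rr
      rw [y1, y2]
      field_simp
    rw [hR]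
    linear_combination (-q * ((1 - Complex.I * x) / (Y - Complex.I * x) ^ 2)) * x2
  rw [e, norm_mul, norm_mul, Complex.norm_exp_ofReal_mul_I, one_mul, mul_pow, norm_div, div_pow, norm_pow,
    ← pow_mul, mul_comm 2 2, pow_mul, Y_norm]
  have := Y_norm 1 x
  rw [Complex.ofReal_one, one_pow] at this
  rw [this]
  have : 1 + x ^ 2 ≠ 0 := by positivity
  field_simp

open MeasureTheory in
theorem rescale {Y : ℝ} (hY : 1 ≤ Y) (K : ℝ → ℝ) :
    ∫ x : ℝ, ((Y ^ 2 + x ^ 2)⁻¹) ^ 2 * K x = Y⁻¹ ^ 3 * ∫ y : ℝ, ((1 + y ^ 2)⁻¹) ^ 2 * K (Y * y) := by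
  have hY0 : 0 < Y := by linarith
  have h := Measure.integral_comp_mul_left (fun x : ℝ => ((Y ^ 2 + x ^ 2)⁻¹) ^ 2 * K x) Y
  rw [abs_of_pos (by positivity), smul_eq_mul, inv_mul_eq_div, eq_div_iff hY0.ne'] at h
  rw [← h, ← integral_const_mul, ← integral_mul_const]
  congr 1
  ext y
  have : Y ^ 2 + (Y * y) ^ 2 = Y ^ 2 * (1 + y ^ 2) := by ring
  rw [this]
  field_simp


open MeasureTheory in
theorem tf_normsq {a : ℂ} (ha : ‖a‖ = 1) {σ Y : ℝ} (hσ : 0 ≤ σ) (hY : 1 ≤ Y) (F : H2)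
    (hF : ∀ z ∈ ball (0:ℂ) 1, F.toFun z = tf a σ Y z) :
    ‖F‖ ^ 2 = Real.pi⁻¹ * (Y⁻¹ ^ 3 * ∫ y : ℝ, ((1 + y ^ 2)⁻¹) ^ 2) := by
  rw [L1'' ha F _ (tf_cont ha hσ hY) (tf_diff ha hY) hF]
  have h := rescale hY (fun _ => 1)
  simp only [mul_one] at h
  rw [← h]
  congr 2
  ext x
  have := resid ha (σ := σ) (Y := Y) (τ := 0) hY 0 1 x
  simpa using this

open MeasureTheory in
theorem tf_resid {a : ℂ} (ha : ‖a‖ = 1) {σ Y τ : ℝ} (hσ : 0 ≤ σ) (hY : 1 ≤ Y)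
    (ψ : ℂ → ℂ) (hψc : ContinuousOn ψ (closedBall 0 1)) (hψ : DifferentiableOn ℂ ψ (ball 0 1))
    (lam : ℂ) (hlam : lam = ψ a * Complex.exp (-(2 * Complex.I * σ * τ))) (G : H2)
    (hG : ∀ z ∈ ball (0:ℂ) 1, G.toFun z = ψ z * tf a σ Y (Phi a τ z) - lam * tf a σ Y z) :
    ‖G‖ ^ 2 = Real.pi⁻¹ * (Y⁻¹ ^ 3 * ∫ y : ℝ, ((1 + y ^ 2)⁻¹) ^ 2 *
      ‖ψ (zx a (Y * y)) * Rr τ Y (Y * y) - ψ a‖ ^ 2) := by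
  have hc : ContinuousOn (fun z => ψ z * tf a σ Y (Phi a τ z) - lam * tf a σ Y z) (closedBall 0 1) :=
    (hψc.mul ((tf_cont ha hσ hY).comp (Phi_cont ha τ) fun z hz => Phi_mem ha τ hz)).sub
      (continuousOn_const.mul (tf_cont ha hσ hY))
  have hd : DifferentiableOn ℂ (fun z => ψ z * tf a σ Y (Phi a τ z) - lam * tf a σ Y z) (ball 0 1) :=
    (hψ.mul ((tf_diff ha hY).comp (Phi_diff ha τ) fun z hz => Phi_mem' ha τ hz)).sub
      ((differentiableOn_const _).mul (tf_diff ha hY))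
  rw [L1'' ha G _ hc hd hG]
  rw [← rescale hY (fun x => ‖ψ (zx a x) * Rr τ Y x - ψ a‖ ^ 2)]
  congr 2
  ext x
  rw [← resid ha (σ := σ) hY, Phi_zx ha, hlam]

theorem zx_tendsto {a : ℂ} (ha : ‖a‖ = 1) {y : ℝ} (hy : y ≠ 0) {Y : ℕ → ℝ} (hY : Tendsto Y atTop atTop) :
    Tendsto (fun n => zx a (Y n * y)) atTop (nhdsWithin a (closedBall 0 1)) := by
  refine tendsto_nhdsWithin_iff.2 ⟨?_, Eventually.of_forall fun n => zx_mem ha _⟩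
  have hb : Tendsto (fun n => 2 / |Y n * y|) atTop (nhds 0) := by
    refine Tendsto.const_div_atTop ?_ 2
    simp only [abs_mul]
    exact (tendsto_abs_atTop_atTop.comp hY).atTop_mul_const (abs_pos.2 hy)
  rw [tendsto_iff_norm_sub_tendsto_zero]
  refine squeeze_zero' (Eventually.of_forall fun n => norm_nonneg _) ?_ hb
  filter_upwards [hY.eventually_gt_atTop 0] with n hn
  rw [norm_sub_rev, a_sub_zx, norm_mul, ha, one_mul, norm_div]
  have h1 := x_le_norm 1 (Y n * y)
  rw [Complex.ofReal_one] at h1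
  have h2 : ‖(2:ℂ)‖ = 2 := by simp
  rw [h2]
  have : 0 < |Y n * y| := abs_pos.2 (mul_ne_zero hn.ne' hy)
  gcongr

theorem Rr_tendsto (τ : ℝ) {y : ℝ} (hy : y ≠ 0) {Y : ℕ → ℝ} (hY : Tendsto Y atTop atTop) :
    Tendsto (fun n => Rr τ (Y n) (Y n * y)) atTop (nhds 1) := by
  have t1 : Tendsto (fun n => 2 * Complex.I * τ / (1 - Complex.I * (Y n * y : ℝ))) atTop (nhds 0) := by
    have hb : Tendsto (fun n => 2 * |τ| / |Y n * y|) atTop (nhds 0) := by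
      refine Tendsto.const_div_atTop ?_ _
      simp only [abs_mul]
      exact (tendsto_abs_atTop_atTop.comp hY).atTop_mul_const (abs_pos.2 hy)
    refine squeeze_zero_norm' ?_ hb
    filter_upwards [hY.eventually_gt_atTop 0] with n hn
    rw [norm_div, I_norm]
    have h1 := x_le_norm 1 (Y n * y)
    rw [Complex.ofReal_one] at h1
    have : 0 < |Y n * y| := abs_pos.2 (mul_ne_zero hn.ne' hy)
    gcongr
  have t2 : Tendsto (fun n => 2 * Complex.I * τ / (Y n - Complex.I * (Y n * y - 2 * τ : ℝ))) atTop (nhds 0) := by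
    have hb : Tendsto (fun n => 2 * |τ| / Y n) atTop (nhds 0) := Tendsto.const_div_atTop hY _
    refine squeeze_zero_norm' ?_ hb
    filter_upwards [hY.eventually_gt_atTop 0] with n hn
    rw [norm_div, I_norm]
    have h1 := Y_le_norm (Y := Y n) (Y n * y - 2 * τ)
    gcongr
  have := (t1.const_add 1).mul ((t2.const_sub 1).pow 2)
  simpa [Rr] using this

open MeasureTheory in
theorem int_sq : Integrable fun y : ℝ => ((1 + y ^ 2)⁻¹) ^ 2 := by
  refine integrable_inv_one_add_sq.mono' (by fun_prop) (Eventually.of_forall fun y => ?_)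
  rw [Real.norm_of_nonneg (by positivity)]
  have h1 : (1 + y ^ 2)⁻¹ ≤ 1 := inv_le_one_of_one_le₀ (by nlinarith [sq_nonneg y])
  have h0 : 0 ≤ (1 + y ^ 2)⁻¹ := by positivity
  nlinarith

open MeasureTheory in
theorem dct {a : ℂ} (ha : ‖a‖ = 1) (τ : ℝ) 
    (ψ : ℂ → ℂ) (hψc : ContinuousOn ψ (closedBall 0 1)) :
    Tendsto (fun n : ℕ => ∫ y : ℝ, ((1 + y ^ 2)⁻¹) ^ 2 *
      ‖ψ (zx a ((n + 1 : ℝ) * y)) * Rr τ (n + 1 : ℝ) ((n + 1 : ℝ) * y) - ψ a‖ ^ 2) atTop (nhds 0) := by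
  have hY : Tendsto (fun n : ℕ => (n + 1 : ℝ)) atTop atTop :=
    tendsto_natCast_atTop_atTop.atTop_add tendsto_const_nhds
  have hY1 : ∀ n : ℕ, (1:ℝ) ≤ n + 1 := fun n => by have : (0:ℝ) ≤ n := n.cast_nonneg; linarith
  obtain ⟨M, hM⟩ := (isCompact_closedBall (0:ℂ) 1).exists_bound_of_continuousOn hψc
  have ham : a ∈ closedBall (0:ℂ) 1 := by simp [ha]
  have hM0 : 0 ≤ M := (norm_nonneg _).trans (hM a ham)
  have := tendsto_integral_of_dominated_convergence (μ := volume) (F := fun (n : ℕ) (y : ℝ) => ((1 + y ^ 2)⁻¹) ^ 2 *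
      ‖ψ (zx a ((n + 1 : ℝ) * y)) * Rr τ (n + 1 : ℝ) ((n + 1 : ℝ) * y) - ψ a‖ ^ 2) (f := fun _ => (0:ℝ))
      (fun y => ((1 + y ^ 2)⁻¹) ^ 2 * (M * (1 + 2 * |τ|) ^ 3 + M) ^ 2) ?_ (int_sq.mul_const _) ?_ ?_
  · simpa using this
  · intro n
    refine Continuous.aestronglyMeasurable ?_
    have c1 : Continuous fun y : ℝ => ψ (zx a ((n + 1 : ℝ) * y)) :=
      hψc.comp_continuous ((zx_continuous ha).comp (by fun_prop)) fun y => zx_mem ha _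
    have c2 : Continuous fun y : ℝ => Rr τ (n + 1 : ℝ) ((n + 1 : ℝ) * y) := by
      unfold Rr
      refine Continuous.mul (continuous_const.add (Continuous.div (by fun_prop) (by fun_prop) fun y => one_sub_I_ne _)) 
        (Continuous.pow (continuous_const.sub (Continuous.div (by fun_prop) (by fun_prop) fun y => Y_sub_I_ne (hY1 n) _)) 2)
    have c3 : Continuous fun y : ℝ => ((1 + y ^ 2)⁻¹) ^ 2 :=
      Continuous.pow (Continuous.inv₀ (by fun_prop) fun y => by positivity) 2
    exact c3.mul (((c1.mul c2).sub continuous_const).norm.pow 2)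
  · intro n
    refine Eventually.of_forall fun y => ?_
    rw [Real.norm_of_nonneg (by positivity)]
    gcongr
    refine (norm_sub_le _ _).trans (add_le_add ?_ (hM a ham))
    rw [norm_mul]
    exact mul_le_mul (hM _ (zx_mem ha _)) (Rr_bound τ (hY1 n) _) (norm_nonneg _) hM0
  · have h0 : ∀ᵐ y : ℝ, y ≠ 0 := by simp [ae_iff]
    filter_upwards [h0] with y hy
    have l1 := (hψc a ham).tendsto.comp (zx_tendsto ha hy hY)
    have l2 := Rr_tendsto τ hy hY
    have l3 := (((l1.mul l2).sub_const (ψ a)).norm.pow 2).const_mul (((1 + y ^ 2)⁻¹) ^ 2)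
    simpa using l3

open MeasureTheory in
theorem int_sq_pos : 0 < ∫ y : ℝ, ((1 + y ^ 2)⁻¹) ^ 2 := by
  rw [integral_pos_iff_support_of_nonneg (fun y => by positivity) int_sq]
  have : Function.support (fun y : ℝ => ((1 + y ^ 2)⁻¹) ^ 2) = Set.univ := by
    ext y
    simp only [Function.mem_support, Set.mem_univ, iff_true]
    positivity
  rw [this]; simp

theorem find_sigma {τ : ℝ} (hτ : τ ≠ 0) {l p : ℂ} (hp : p ≠ 0) (h : ‖l‖ = ‖p‖) :
    ∃ σ : ℝ, 0 ≤ σ ∧ l = p * Complex.exp (-(2 * Complex.I * σ * τ)) := by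
  have hn : ‖l / p‖ = 1 := by rw [norm_div, h, div_self (by simpa using hp)]
  have h1 := Complex.norm_mul_exp_arg_mul_I (l / p)
  rw [hn] at h1
  have hl : l = p * Complex.exp (Complex.arg (l / p) * Complex.I) := by
    have : l = p * (l / p) := by field_simp
    rw [Complex.ofReal_one, one_mul] at h1
    rw [h1, ← this]
  obtain ⟨θ, hθ⟩ : ∃ θ, θ = Complex.arg (l / p) := ⟨_, rfl⟩
  have b1 := Complex.neg_pi_lt_arg (l / p)
  have b2 := Complex.arg_le_pi (l / p)
  rw [← hθ] at b1 b2 hl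
  have hpi := Real.pi_pos
  have hτ' : (τ : ℂ) ≠ 0 := by exact_mod_cast hτ
  rcases lt_or_gt_of_ne hτ with h0 | h0
  · refine ⟨(θ + 2 * Real.pi) / (-(2 * τ)), div_nonneg (by linarith) (by linarith), ?_⟩
    rw [hl]
    congr 1
    have : -(2 * Complex.I * ((θ + 2 * Real.pi) / (-(2 * τ)) : ℝ) * τ) = θ * Complex.I + 2 * Real.pi * Complex.I := by
      push_cast; field_simp
    rw [this, Complex.exp_periodic]
  · refine ⟨(2 * Real.pi - θ) / (2 * τ), div_nonneg (by linarith) (by linarith), ?_⟩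
    rw [hl]
    congr 1
    have : -(2 * Complex.I * ((2 * Real.pi - θ) / (2 * τ) : ℝ) * τ) = θ * Complex.I - 2 * Real.pi * Complex.I := by
      push_cast; field_simp; ring
    rw [this, Complex.exp_periodic.sub_eq]

theorem circle_mem {a : ℂ} (ha : ‖a‖ = 1) {τ : ℝ} (hτ : τ ≠ 0)
    (ψ : ℂ → ℂ) (hψc : ContinuousOn ψ (closedBall 0 1)) (hψ : DifferentiableOn ℂ ψ (ball 0 1))
    (hψa : ψ a ≠ 0) (T : H2 →L[ℂ] H2)
    (hT : ∀ f : H2, ∀ z ∈ ball (0:ℂ) 1, (T f).toFun z = ψ z * f.toFun (Phi a τ z))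
    (lam : ℂ) (hl : ‖lam‖ = ‖ψ a‖) : lam ∈ spectrum ℂ T := by
  obtain ⟨σ, hσ, hlam⟩ := find_sigma hτ hψa hl
  rw [spectrum.mem_iff]
  intro hu
  obtain ⟨u, hu⟩ := hu
  have hinv : ((u⁻¹ : (H2 →L[ℂ] H2)ˣ) : H2 →L[ℂ] H2) * (algebraMap ℂ (H2 →L[ℂ] H2) lam - T) = 1 := by
    rw [← hu]; simp
  set B := ((u⁻¹ : (H2 →L[ℂ] H2)ˣ) : H2 →L[ℂ] H2) with hB
  set c0 := ∫ y : ℝ, ((1 + y ^ 2)⁻¹) ^ 2 with hc0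
  have hle : ∀ n : ℕ, c0 ≤ ‖B‖ ^ 2 * ∫ y : ℝ, ((1 + y ^ 2)⁻¹) ^ 2 *
      ‖ψ (zx a ((n + 1 : ℝ) * y)) * Rr τ (n + 1 : ℝ) ((n + 1 : ℝ) * y) - ψ a‖ ^ 2 := by
    intro n
    obtain ⟨Y, hYd⟩ : ∃ Y : ℝ, Y = n + 1 := ⟨_, rfl⟩
    rw [← hYd]
    have hY1 : 1 ≤ Y := by rw [hYd]; have : (0:ℝ) ≤ n := n.cast_nonneg; linarith
    obtain ⟨F, hF, -⟩ := L1' ha _ (tf_cont ha hσ hY1) (tf_diff ha hY1)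
    have n1 := tf_normsq ha hσ hY1 F hF
    have n2 := tf_resid ha hσ hY1 ψ hψc hψ lam hlam (T F - lam • F) (fun z hz => by
      rw [H2.toFun_sub _ _ hz, H2.toFun_smul, hT F z hz, hF z hz, hF _ (Phi_mem' ha τ hz)])
    have e : F = B (lam • F - T F) := by
      have := congrArg (fun S : H2 →L[ℂ] H2 => S F) hinv
      simpa [Algebra.algebraMap_eq_smul_one] using this.symm
    have e2 : ‖F‖ ≤ ‖B‖ * ‖T F - lam • F‖ := by
      rw [norm_sub_rev]
      conv_lhs => rw [e]
      exact B.le_opNorm _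
    have e3 : ‖F‖ ^ 2 ≤ ‖B‖ ^ 2 * ‖T F - lam • F‖ ^ 2 := by
      rw [← mul_pow]; gcongr
    rw [n1, n2] at e3
    have hpos : 0 < Real.pi⁻¹ * Y⁻¹ ^ 3 := by have := Real.pi_pos; positivity
    refine le_of_mul_le_mul_left ?_ hpos
    refine le_trans (le_of_eq ?_) (e3.trans (le_of_eq ?_)) <;> ring
  have hlim := (dct ha τ ψ hψc).const_mul (‖B‖ ^ 2)
  rw [mul_zero] at hlim
  have := ge_of_tendsto' hlim hle
  exact absurd int_sq_pos (not_lt.2 this)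


theorem main_spec {a : ℂ} (ha : ‖a‖ = 1) {τ : ℝ} (hτ : τ ≠ 0)
    (ψ : ℂ → ℂ) (hψc : ContinuousOn ψ (closedBall 0 1)) (hψ : DifferentiableOn ℂ ψ (ball 0 1))
    (hψ0 : ∀ z ∈ closedBall (0:ℂ) 1, ψ z ≠ 0) (T : H2 →L[ℂ] H2)
    (hT : ∀ f : H2, ∀ z ∈ ball (0:ℂ) 1, (T f).toFun z = ψ z * f.toFun (Phi a τ z)) :
    spectrum ℂ T = {lam : ℂ | ‖lam‖ = ‖ψ a‖} := by
  have ham : a ∈ closedBall (0:ℂ) 1 := by simp [ha]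
  ext lam
  refine ⟨fun hl => ?_, fun hl => circle_mem ha hτ ψ hψc hψ (hψ0 a ham) T hT lam hl⟩
  have hωc : ContinuousOn (fun z => (ψ (Phi a (-τ) z))⁻¹) (closedBall 0 1) :=
    ContinuousOn.inv₀ (hψc.comp (Phi_cont ha (-τ)) fun z hz => Phi_mem ha _ hz)
      fun z hz => hψ0 _ (Phi_mem ha _ hz)
  have hω : DifferentiableOn ℂ (fun z => (ψ (Phi a (-τ) z))⁻¹) (ball 0 1) :=
    DifferentiableOn.fun_inv (hψ.comp (Phi_diff ha (-τ)) fun z hz => Phi_mem' ha _ hz)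
      fun z hz => hψ0 _ (Phi_mem ha _ (ball_subset_closedBall hz))
  obtain ⟨S, hS⟩ := W2 ha (-τ) _ hωc hω
  have p1 : ∀ z ∈ closedBall (0:ℂ) 1, Phi a (-τ) (Phi a τ z) = z := fun z hz => by
    rw [Phi_add ha _ _ hz, neg_add_cancel, Phi_zero]
  have p2 : ∀ z ∈ closedBall (0:ℂ) 1, Phi a τ (Phi a (-τ) z) = z := fun z hz => by
    rw [Phi_add ha _ _ hz, add_neg_cancel, Phi_zero]
  have hTS : T * S = 1 := by
    ext1 f
    refine H2.ext_toFun fun z hz => ?_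
    have hz' := ball_subset_closedBall hz
    rw [ContinuousLinearMap.mul_apply, hT _ z hz, hS _ _ (Phi_mem' ha τ hz), p1 z hz',
      mul_inv_cancel_left₀ (hψ0 z hz'), ContinuousLinearMap.one_apply]
  have hST : S * T = 1 := by
    ext1 f
    refine H2.ext_toFun fun z hz => ?_
    have hz' := ball_subset_closedBall hz
    rw [ContinuousLinearMap.mul_apply, hS _ z hz, hT _ _ (Phi_mem' ha _ hz), p2 z hz',
      inv_mul_cancel_left₀ (hψ0 _ (Phi_mem ha _ hz')), ContinuousLinearMap.one_apply]
  let u : (H2 →L[ℂ] H2)ˣ := ⟨T, S, hTS, hST⟩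
  have h1 := spec_le ha τ hτ ψ hψc hψ T hT lam hl
  have hl0 : lam ≠ 0 := by
    rintro rfl
    exact (spectrum.zero_notMem_iff ℂ).2 u.isUnit hl
  have hl' : lam⁻¹ ∈ spectrum ℂ S := by
    have := (spectrum.inv_mem_iff (r := Units.mk0 lam hl0) (a := u)).1 hl
    rw [Units.val_inv_eq_inv_val, Units.val_mk0] at this
    exact this
  have h2 := spec_le ha (-τ) (neg_ne_zero.2 hτ) _ hωc hω S hS _ hl'
  simp only [Phi_a, norm_inv] at h2
  have h3 := (inv_le_inv₀ (norm_pos_iff.2 hl0) (norm_pos_iff.2 (hψ0 a ham))).1 h2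
  exact le_antisymm h1 h3


/-- Let `φ` be a parabolic automorphism of `𝔻` with unique fixed point `a ∈ ∂𝔻`, and let `ψ`
be holomorphic on `𝔻`, continuous on the closed disc and bounded away from zero. Then the
spectrum of the weighted composition operator `C_{ψ,φ}` on `H²(𝔻)` is the circle
`{λ : |λ| = |ψ(a)|}`. -/
theorem stmt18 (φ φinv : ℂ → ℂ)
    (hφc : ContinuousOn φ (closedBall 0 1))
    (hφ : DifferentiableOn ℂ φ (ball 0 1))
    (hφinv : DifferentiableOn ℂ φinv (ball 0 1))
    (hφm : Set.MapsTo φ (ball 0 1) (ball 0 1))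
    (hφinvm : Set.MapsTo φinv (ball 0 1) (ball 0 1))
    (hleft : ∀ z ∈ ball (0 : ℂ) 1, φinv (φ z) = z)
    (hright : ∀ z ∈ ball (0 : ℂ) 1, φ (φinv z) = z)
    (a : ℂ) (ha : ‖a‖ = 1) (hfix : φ a = a)
    (honly : ∀ z ∈ closedBall (0 : ℂ) 1, φ z = z → z = a)
    (ψ : ℂ → ℂ)
    (hψc : ContinuousOn ψ (closedBall 0 1))
    (hψ : DifferentiableOn ℂ ψ (ball 0 1))
    (hψ0 : ∃ ε > (0 : ℝ), ∀ z ∈ ball (0 : ℂ) 1, ε ≤ ‖ψ z‖)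
    (T : H2 →L[ℂ] H2)
    (hT : ∀ f : H2, ∀ z ∈ ball (0 : ℂ) 1, (T f).toFun z = ψ z * f.toFun (φ z)) :
    spectrum ℂ T = {lam : ℂ | ‖lam‖ = ‖ψ a‖} := by
  obtain ⟨b, c, hb, hc, h⟩ := classify φ φinv hφc hφ hφinv hφm hφinvm hleft hright
  obtain ⟨τ, hτ, hφP⟩ := parabolic φ b c hb hc h a ha hfix honly
  refine main_spec ha hτ ψ hψc hψ ?_ T fun f z hz => ?_
  · obtain ⟨ε, hε, hle⟩ := hψ0
    intro z hz h0
    have hz' : z ∈ closure (ball (0:ℂ) 1) := by rwa [closure_ball _ one_ne_zero]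
    have hcw : ContinuousWithinAt ψ (ball 0 1) z := (hψc z hz).mono ball_subset_closedBall
    have : (nhdsWithin z (ball (0:ℂ) 1)).NeBot := mem_closure_iff_nhdsWithin_neBot.1 hz'
    have hge : ε ≤ ‖ψ z‖ := ge_of_tendsto hcw.tendsto.norm
      (by filter_upwards [self_mem_nhdsWithin] with w hw using hle w hw)
    rw [h0, norm_zero] at hge
    linarith
  · rw [hT f z hz, hφP z (ball_subset_closedBall hz)]
end

section
/- Let $\varphi(z) = \frac{z+s}{1+sz}$ with $s \in (0,1)$ and let $\psi$ be holomorphic on $\mathbb{D}$, continuous on $\overline{\mathbb{D}}$, and bounded away from zero. Then the spectral radius of $C_{\psi,\varphi}$ on $H^2(\mathbb{D})$ satisfies $r(C_{\psi,\varphi}) \leq \max\left\{|\psi(1)|\left(\frac{1+s}{1-s}\right)^{1/2},\; |\psi(-1)|\left(\frac{1-s}{1+s}\right)^{1/2}\right\}$. -/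
open Metric

open Complex in
lemma H2.hasFPS (f : H2) :
    HasFPowerSeriesOnBall f.toFun (FormalMultilinearSeries.ofScalars ℂ (fun n => f n)) 0 1 := by
  have hr : (1 : ENNReal) ≤ (FormalMultilinearSeries.ofScalars ℂ (fun n => f n)).radius := by
    have := (FormalMultilinearSeries.ofScalars ℂ (fun n => f n)).le_radius_of_bound
      (r := 1) ‖f‖ (fun n => by
        rw [FormalMultilinearSeries.ofScalars_norm]
        simpa using lp.norm_apply_le_norm (by norm_num) f n)
    simpa using this
  have h := (FormalMultilinearSeries.hasFPowerSeriesOnBall _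
    (lt_of_lt_of_le zero_lt_one hr)).mono zero_lt_one hr
  refine h.congr ?_
  intro z hz
  have := congrFun (FormalMultilinearSeries.ofScalarsSum_eq_tsum (E := ℂ) (fun n => f n)) z
  simp only [FormalMultilinearSeries.ofScalarsSum] at this
  rw [this]
  simp [H2.toFun]

lemma fourierCoeffOn_circle (F : ℂ → ℂ) (n : ℤ) :
    fourierCoeffOn Real.two_pi_pos (fun θ => F (circleMap 0 1 θ)) n =
      (2 * Real.pi * Complex.I : ℂ)⁻¹ * ∮ z in C(0, 1), z ^ (-n - 1) * F z := by
  rw [fourierCoeffOn_eq_integral]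
  simp only [circleIntegral, smul_eq_mul, deriv_circleMap]
  rw [← intervalIntegral.integral_const_mul]
  simp only [Complex.real_smul]
  rw [← intervalIntegral.integral_const_mul]
  apply intervalIntegral.integral_congr
  intro θ _
  have hz : circleMap 0 1 θ ≠ 0 := by simp [circleMap]
  have hI := Complex.I_ne_zero
  have hp : (Real.pi : ℂ) ≠ 0 := by exact_mod_cast Real.pi_ne_zero
  have h1 : fourier (-n) (θ : AddCircle (2 * Real.pi - 0)) = circleMap 0 1 θ ^ (-n) := by
    rw [fourier_coe_apply]
    simp only [circleMap, zero_add, Complex.ofReal_one, one_mul]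
    rw [← Complex.exp_int_mul]
    congr 1
    push_cast
    field_simp
    ring
  simp only
  rw [h1, zpow_sub_one₀ hz]
  push_cast
  field_simp
  ring

lemma parseval (f : H2) (F : ℂ → ℂ) (hF : ContinuousOn F (closedBall 0 1))
    (hfF : ∀ z ∈ ball (0 : ℂ) 1, f.toFun z = F z) :
    ‖f‖ ^ 2 = (2 * Real.pi)⁻¹ * ∫ θ in (0 : ℝ)..2 * Real.pi, ‖F (circleMap 0 1 θ)‖ ^ 2 := by
  have hps := f.hasFPS
  have hball : Metric.eball (0 : ℂ) 1 = ball 0 1 := by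
    rw [← ENNReal.ofReal_one, Metric.eball_ofReal]
  have hd : DifferentiableOn ℂ F (ball 0 1) := by
    have := hps.differentiableOn
    rw [hball] at this
    exact this.congr (fun z hz => (hfF z hz).symm)
  have hdc : DiffContOnCl ℂ F (ball 0 1) := ⟨hd, by rwa [closure_ball _ one_ne_zero]⟩
  have hps2 := DiffContOnCl.hasFPowerSeriesOnBall (R := 1) (by simpa using hdc) one_pos
  have hps1 : HasFPowerSeriesOnBall F (FormalMultilinearSeries.ofScalars ℂ (fun n => f n)) 0 1 :=
    hps.congr (by rw [hball]; exact hfF)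
  have heq := hps1.hasFPowerSeriesAt.eq_formalMultilinearSeries hps2.hasFPowerSeriesAt
  have hcoef : ∀ n : ℕ, f n = fourierCoeffOn Real.two_pi_pos (fun θ => F (circleMap 0 1 θ)) (n : ℤ) := by
    intro n
    have h1 := congrArg (fun p => p n (fun _ => (1 : ℂ))) heq
    simp only [cauchyPowerSeries_apply] at h1
    rw [FormalMultilinearSeries.ofScalars_apply_eq] at h1
    rw [fourierCoeffOn_circle]
    simp only [one_pow, smul_eq_mul, mul_one, NNReal.coe_one, sub_zero] at h1
    rw [h1]
    congr 1
    apply circleIntegral.integral_congr zero_le_one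
    intro z hz
    have hz0 : z ≠ 0 := by rintro rfl; simp at hz
    simp only
    rw [zpow_sub_one₀ hz0, zpow_neg, zpow_natCast]
    simp [mul_assoc]
  have hneg : ∀ n : ℕ, fourierCoeffOn Real.two_pi_pos (fun θ => F (circleMap 0 1 θ)) (-(n + 1 : ℤ)) = 0 := by
    intro n
    rw [fourierCoeffOn_circle]
    have : DiffContOnCl ℂ (fun z : ℂ => z ^ n * F z) (ball 0 1) := by
      have h2 : DiffContOnCl ℂ (fun z : ℂ => z ^ n) (ball 0 1) :=
        (differentiable_pow n).diffContOnCl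
      simpa using h2.smul hdc
    have h3 := this.circleIntegral_eq_zero zero_le_one
    have h4 : (-(-(n + 1 : ℤ)) - 1) = n := by ring
    rw [h4]
    simp only [zpow_natCast]
    rw [h3, mul_zero]
  have hcont : Continuous (fun θ : ℝ => F (circleMap 0 1 θ)) :=
    hF.comp_continuous (continuous_circleMap 0 1) (fun θ => by simp [circleMap])
  have hL2 : MeasureTheory.MemLp (fun θ : ℝ => F (circleMap 0 1 θ)) 2
      (MeasureTheory.volume.restrict (Set.Ioc 0 (2 * Real.pi))) := by
    obtain ⟨C, hC⟩ := (isCompact_Icc (a := (0:ℝ)) (b := 2 * Real.pi)).exists_bound_of_continuousOn hcont.continuousOn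
    refine MeasureTheory.MemLp.of_bound hcont.aestronglyMeasurable C ?_
    rw [MeasureTheory.ae_restrict_iff' measurableSet_Ioc]
    exact Filter.Eventually.of_forall (fun x hx => hC x ⟨hx.1.le, hx.2⟩)
  have hsum := hasSum_sq_fourierCoeffOn Real.two_pi_pos hL2
  have hsumf : HasSum (fun n : ℕ => ‖f n‖ ^ 2) (‖f‖ ^ 2) := by
    have := lp.hasSum_norm (p := 2) (by norm_num) f
    simpa using this
  have h5 : HasSum (fun i : ℤ => ‖fourierCoeffOn Real.two_pi_pos (fun θ => F (circleMap 0 1 θ)) i‖ ^ 2)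
      (‖f‖ ^ 2 + 0) := by
    apply HasSum.of_nat_of_neg_add_one
    · simpa only [hcoef] using hsumf
    · simp only [hneg]; simpa using hasSum_zero
  have := h5.unique hsum
  simpa using this

lemma normSq_one_add (s : ℝ) (θ : ℝ) :
    Complex.normSq (1 + s * circleMap 0 1 θ) = 1 + 2 * s * Real.cos θ + s ^ 2 := by
  simp only [circleMap, Complex.normSq_apply]
  simp [Complex.exp_ofReal_mul_I_re, Complex.exp_ofReal_mul_I_im]
  nlinarith [Real.sin_sq_add_cos_sq θ]

lemma re_pos_aux (s : ℝ) (hs : s ∈ Set.Ioo (0 : ℝ) 1) (θ : ℝ) :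
    0 < (1 + s * circleMap 0 1 θ).re := by
  simp [circleMap, Complex.exp_ofReal_mul_I_re]
  nlinarith [hs.1, hs.2, Real.neg_one_le_cos θ]

lemma change_var (s : ℝ) (hs : s ∈ Set.Ioo (0 : ℝ) 1) (G : ℂ → ℝ)
    (hG : ContinuousOn G (sphere 0 1)) :
    ∫ θ in (0 : ℝ)..2 * Real.pi, G ((circleMap 0 1 θ + s) / (1 + s * circleMap 0 1 θ)) *
      ((1 - s ^ 2) / (1 + 2 * s * Real.cos θ + s ^ 2)) =
    ∫ θ in (0 : ℝ)..2 * Real.pi, G (circleMap 0 1 θ) := by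
  set τ : ℝ → ℝ := fun θ => θ - 2 * Complex.arg (1 + s * circleMap 0 1 θ) with hτ
  have hcont : Continuous (fun θ : ℝ => G (circleMap 0 1 θ)) :=
    hG.comp_continuous (continuous_circleMap 0 1) (fun θ => by simp [circleMap])
  have hpos : ∀ θ : ℝ, 0 < 1 + 2 * s * Real.cos θ + s ^ 2 := by
    intro θ
    rw [← normSq_one_add, Complex.normSq_pos]
    intro h
    have := re_pos_aux s hs θ
    rw [h] at this; simp at this
  have hder : ∀ θ ∈ Set.uIcc 0 (2 * Real.pi),
      HasDerivAt τ ((1 - s ^ 2) / (1 + 2 * s * Real.cos θ + s ^ 2)) θ := by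
    intro θ _
    have h1 : HasDerivAt (fun t : ℝ => 1 + s * circleMap 0 1 t) (s * (circleMap 0 1 θ * Complex.I)) θ := by
      simpa using (((hasDerivAt_circleMap 0 1 θ).const_mul (s : ℂ)).const_add 1)
    have h2 := h1.clog_real (Or.inl (re_pos_aux s hs θ))
    have h3 := (Complex.imCLM.hasFDerivAt.comp_hasDerivAt θ h2)
    have h4 := (hasDerivAt_id θ).sub (h3.const_mul 2)
    have h5 : HasDerivAt τ (1 - 2 * (s * (circleMap 0 1 θ * Complex.I) / (1 + s * circleMap 0 1 θ)).im) θ := by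
      refine h4.congr_of_eventuallyEq ?_ |>.congr_deriv ?_
      · exact Filter.Eventually.of_forall (fun t => by simp [hτ, Complex.log_im])
      · simp
    convert h5 using 1
    rw [Complex.div_im, normSq_one_add]
    have := (hpos θ).ne'
    simp only [circleMap]
    simp [Complex.exp_ofReal_mul_I_re, Complex.exp_ofReal_mul_I_im]
    rw [← sub_div, eq_comm, ← sub_eq_zero]
    field_simp
    linear_combination (-2 * s ^ 2) * (Real.sin_sq_add_cos_sq θ)
  have hc' : ContinuousOn (fun θ => (1 - s ^ 2) / (1 + 2 * s * Real.cos θ + s ^ 2))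
      (Set.uIcc 0 (2 * Real.pi)) := by
    refine ContinuousOn.div (by fun_prop) (by fun_prop) (fun θ _ => (hpos θ).ne')
  have key := intervalIntegral.integral_comp_mul_deriv hder hc' hcont
  have hτ0 : τ 0 = 0 := by
    have h : (1 + s * circleMap 0 1 0 : ℂ) = ((1 + s : ℝ) : ℂ) := by simp [circleMap]
    simp only [hτ]
    rw [h, Complex.arg_ofReal_of_nonneg (by linarith [hs.1])]; simp
  have hτ1 : τ (2 * Real.pi) = 2 * Real.pi := by
    have h : (1 + s * circleMap 0 1 (2 * Real.pi) : ℂ) = ((1 + s : ℝ) : ℂ) := by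
      simp [circleMap]
    simp only [hτ]
    rw [h, Complex.arg_ofReal_of_nonneg (by linarith [hs.1])]; simp
  rw [hτ0, hτ1] at key
  rw [← key]
  apply intervalIntegral.integral_congr
  intro θ _
  simp only [Function.comp]
  congr 2
  set w : ℂ := 1 + s * circleMap 0 1 θ with hw
  have hw0 : w ≠ 0 := by
    intro h
    have := re_pos_aux s hs θ
    rw [← hw, h] at this; simp at this
  have h6 := Complex.norm_mul_exp_arg_mul_I w
  set E := Complex.exp (w.arg * Complex.I) with hE
  have h7 : circleMap 0 1 (τ θ) = circleMap 0 1 θ / E ^ 2 := by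
    simp only [circleMap, hτ, hE, ← Complex.exp_nat_mul, Complex.ofReal_one, one_mul, zero_add]
    rw [← Complex.exp_sub]
    congr 1
    simp only [hw, circleMap, Complex.ofReal_one, one_mul, zero_add]
    push_cast
    ring
  have hn : (‖w‖ : ℂ) ≠ 0 := by simpa using hw0
  have hE0 : E ≠ 0 := Complex.exp_ne_zero _
  have h8 : (starRingEnd ℂ) w * w = (‖w‖ : ℂ) ^ 2 := Complex.conj_mul' w
  have h9 : circleMap 0 1 θ * (starRingEnd ℂ) w = circleMap 0 1 θ + s := by
    have : circleMap 0 1 θ * (starRingEnd ℂ) (circleMap 0 1 θ) = 1 := by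
      rw [Complex.mul_conj']; simp [circleMap]
    rw [hw]; simp
    linear_combination (s : ℂ) * this
  rw [h7, ← h9, div_eq_div_iff hw0 (pow_ne_zero _ hE0)]
  have h10 : (starRingEnd ℂ) w * E ^ 2 = w := by
    have : (‖w‖ : ℂ) ^ 2 * ((starRingEnd ℂ) w * E ^ 2) = (‖w‖ : ℂ) ^ 2 * w := by
      rw [← h8]
      calc _ = (starRingEnd ℂ) w * (‖w‖ * E) ^ 2 := by rw [mul_pow, ← h8]; ring
        _ = _ := by rw [h6]; ring
    exact mul_left_cancel₀ (pow_ne_zero 2 hn) this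
  linear_combination (circleMap 0 1 θ) * h10

lemma den_pos (s : ℝ) (hs : s ∈ Set.Ioo (0 : ℝ) 1) (x : ℝ) (hx : -1 ≤ x) :
    0 < 1 + 2 * s * x + s ^ 2 := by
  nlinarith [hs.1, hs.2, mul_nonneg hs.1.le (by linarith : 0 ≤ x + 1), sq_pos_of_pos (by linarith [hs.2] : 0 < 1 - s)]

lemma sphere_re (z : ℂ) (hz : z ∈ sphere (0 : ℂ) 1) : z.re ^ 2 + z.im ^ 2 = 1 := by
  have h : ‖z‖ = 1 := by simpa using hz
  have := Complex.sq_norm z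
  rw [h, Complex.normSq_apply] at this
  linarith

lemma phi_re (s : ℝ) (hs : s ∈ Set.Ioo (0 : ℝ) 1) (z : ℂ) (hz : z ∈ sphere (0 : ℂ) 1) :
    ((z + s) / (1 + s * z)).re = z.re + 2 * s * (1 - z.re ^ 2) / (1 + 2 * s * z.re + s ^ 2) := by
  have h := sphere_re z hz
  have hx : -1 ≤ z.re := by nlinarith [sq_nonneg z.im]
  have hd := den_pos s hs z.re hx
  have hn : Complex.normSq (1 + s * z) = 1 + 2 * s * z.re + s ^ 2 := by
    rw [Complex.normSq_apply]; simp; linear_combination s ^ 2 * h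
  rw [Complex.div_re, hn]
  simp
  rw [← add_div, div_eq_iff hd.ne', add_mul z.re (_ / _), div_mul_cancel₀ _ hd.ne']
  linear_combination s * h

lemma lyap (s : ℝ) (hs : s ∈ Set.Ioo (0 : ℝ) 1) (ψ : ℂ → ℂ)
    (hψc : ContinuousOn ψ (closedBall 0 1)) (q : ℝ) (hq : 0 < q)
    (h1 : ‖ψ 1‖ * Real.sqrt ((1 + s) / (1 - s)) < q)
    (h2 : ‖ψ (-1)‖ * Real.sqrt ((1 - s) / (1 + s)) < q) :
    ∃ A : ℝ, 0 ≤ A ∧ ∀ z ∈ sphere (0 : ℂ) 1,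
      ‖ψ z‖ ^ 2 * Real.exp (2 * A * z.re) ≤
        q ^ 2 * (Real.exp (2 * A * ((z + s) / (1 + s * z)).re) *
          ((1 - s ^ 2) / (1 + 2 * s * z.re + s ^ 2))) := by
  obtain ⟨hs0, hs1⟩ := hs
  have hs' : s ∈ Set.Ioo (0 : ℝ) 1 := ⟨hs0, hs1⟩
  have hden : ∀ z ∈ sphere (0 : ℂ) 1, 0 < 1 + 2 * s * z.re + s ^ 2 := fun z hz =>
    den_pos s hs' z.re (by nlinarith [sphere_re z hz, sq_nonneg z.im])
  have hψs : ContinuousOn ψ (sphere 0 1) := hψc.mono sphere_subset_closedBall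
  set H : ℂ → ℝ := fun z => ‖ψ z‖ ^ 2 * ((1 + 2 * s * z.re + s ^ 2) / (1 - s ^ 2)) with hH
  set d : ℂ → ℝ := fun z => 2 * s * (1 - z.re ^ 2) / (1 + 2 * s * z.re + s ^ 2) with hd
  have hHc : ContinuousOn H (sphere 0 1) := by
    apply (hψs.norm.pow 2).mul
    apply Continuous.continuousOn
    fun_prop
  have hdc : ContinuousOn d (sphere 0 1) := by
    refine ContinuousOn.div ?_ ?_ (fun z hz => (hden z hz).ne')
    · apply Continuous.continuousOn; fun_prop
    · apply Continuous.continuousOn; fun_prop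
  have hdnn : ∀ z ∈ sphere (0 : ℂ) 1, 0 ≤ d z := by
    intro z hz
    apply div_nonneg _ (hden z hz).le
    nlinarith [sphere_re z hz, sq_nonneg z.im]
  have h1s : 0 < 1 - s ^ 2 := by nlinarith
  have hsm : 0 < 1 - s := by linarith
  have hsp : 0 < 1 + s := by linarith
  have hH1 : H 1 < q ^ 2 := by
    have : H 1 = (‖ψ 1‖ * Real.sqrt ((1 + s) / (1 - s))) ^ 2 := by
      rw [mul_pow, Real.sq_sqrt (by positivity)]
      simp only [hH]
      congr 1
      simp
      field_simp
      ring
    rw [this]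
    exact pow_lt_pow_left₀ h1 (by positivity) two_ne_zero
  have hH2 : H (-1) < q ^ 2 := by
    have : H (-1) = (‖ψ (-1)‖ * Real.sqrt ((1 - s) / (1 + s))) ^ 2 := by
      rw [mul_pow, Real.sq_sqrt (by positivity)]
      simp only [hH]
      congr 1
      simp
      field_simp
      ring
    rw [this]
    exact pow_lt_pow_left₀ h2 (by positivity) two_ne_zero
  -- reduction
  suffices h : ∃ A : ℝ, 0 ≤ A ∧ ∀ z ∈ sphere (0 : ℂ) 1, H z ≤ q ^ 2 * Real.exp (2 * A * d z) by
    obtain ⟨A, hA, h⟩ := h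
    refine ⟨A, hA, fun z hz => ?_⟩
    have hz' := h z hz
    have hdz := hden z hz
    rw [phi_re s hs' z hz, mul_add, Real.exp_add]
    have e : ‖ψ z‖ ^ 2 = H z * ((1 - s ^ 2) / (1 + 2 * s * z.re + s ^ 2)) := by
      simp only [hH]
      field_simp
    rw [e]
    calc _ ≤ (q ^ 2 * Real.exp (2 * A * d z)) * ((1 - s ^ 2) / (1 + 2 * s * z.re + s ^ 2)) *
          Real.exp (2 * A * z.re) := by gcongr
      _ = _ := by simp only [hd]; ring
  set K : Set ℂ := sphere 0 1 ∩ H ⁻¹' Set.Ici (q ^ 2) with hK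
  have hKc : IsCompact K :=
    (isCompact_sphere (0 : ℂ) 1).of_isClosed_subset
      (hHc.preimage_isClosed_of_isClosed isClosed_sphere isClosed_Ici) Set.inter_subset_left
  rcases K.eq_empty_or_nonempty with hKe | hKn
  · refine ⟨0, le_rfl, fun z hz => ?_⟩
    by_contra hcon
    have : z ∈ K := ⟨hz, by simp at hcon ⊢; exact hcon.le⟩
    rw [hKe] at this; exact this
  · obtain ⟨z0, hz0, hmin⟩ := hKc.exists_isMinOn hKn (hdc.mono Set.inter_subset_left)
    have hd0 : 0 < d z0 := by
      apply div_pos _ (hden z0 hz0.1)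
      have hr := sphere_re z0 hz0.1
      have him : z0.im ≠ 0 := by
        intro him
        rw [him] at hr
        have : z0.re = 1 ∨ z0.re = -1 := by
          have h0 : z0.re ^ 2 = 1 := by linarith
          simpa using h0
        rcases this with h | h
        · have : z0 = 1 := Complex.ext (by simp [h]) (by simp [him])
          have h3 := hz0.2
          rw [this] at h3
          exact absurd h3 (not_le.2 hH1)
        · have : z0 = -1 := Complex.ext (by simp [h]) (by simp [him])
          have h3 := hz0.2
          rw [this] at h3
          exact absurd h3 (not_le.2 hH2)
      have : 0 < z0.im ^ 2 := by positivity
      have : 0 < 1 - z0.re ^ 2 := by linarith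
      positivity
    obtain ⟨B, hB⟩ := (isCompact_sphere (0 : ℂ) 1).exists_bound_of_continuousOn hHc
    have hB0 : 0 ≤ B := (norm_nonneg _).trans (hB z0 hz0.1)
    refine ⟨B / (q ^ 2 * d z0), by positivity, fun z hz => ?_⟩
    set A := B / (q ^ 2 * d z0) with hA
    have hA0 : 0 ≤ A := by positivity
    by_cases hzK : q ^ 2 ≤ H z
    · have hdz : d z0 ≤ d z := hmin (show z ∈ K from ⟨hz, hzK⟩)
      have hHz : H z ≤ B := (le_abs_self _).trans (hB z hz)
      have e1 : q ^ 2 * (A * d z0) = B := by rw [hA]; field_simp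
      have e2 := Real.add_one_le_exp (2 * A * d z)
      have e3 : A * d z0 ≤ A * d z := mul_le_mul_of_nonneg_left hdz hA0
      have e4 : 0 ≤ A * d z := mul_nonneg hA0 (hdnn z hz)
      calc H z ≤ q ^ 2 * (A * d z0) := by rw [e1]; exact hHz
        _ ≤ _ := by gcongr; linarith
    · have := hdnn z hz
      have e2 : 1 ≤ Real.exp (2 * A * d z) := Real.one_le_exp (by positivity)
      have : q ^ 2 * 1 ≤ q ^ 2 * Real.exp (2 * A * d z) := by gcongr
      push Not at hzK
      linarith

lemma phi_norm (s : ℝ) (hs : s ∈ Set.Ioo (0 : ℝ) 1) (z : ℂ) (hz : ‖z‖ ≤ 1) :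
    1 + s * z ≠ 0 ∧ ‖(z + s) / (1 + s * z)‖ ≤ 1 ∧ (‖z‖ < 1 → ‖(z + s) / (1 + s * z)‖ < 1) ∧
      (‖z‖ = 1 → ‖(z + s) / (1 + s * z)‖ = 1) := by
  obtain ⟨hs0, hs1⟩ := hs
  have h0 : (1 + s * z : ℂ) ≠ 0 := by
    intro h
    have h' : (s * z : ℂ) = -1 := by linear_combination h
    have := congrArg norm h'
    simp [abs_of_pos hs0] at this
    nlinarith
  have hp : 0 < ‖(1 + s * z : ℂ)‖ := norm_pos_iff.2 h0
  have key : ‖(1 + s * z : ℂ)‖ ^ 2 - ‖z + s‖ ^ 2 = (1 - s ^ 2) * (1 - ‖z‖ ^ 2) := by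
    simp only [Complex.sq_norm, Complex.normSq_apply]
    simp
    ring
  have h1s : 0 < 1 - s ^ 2 := by nlinarith
  have hn := norm_nonneg z
  refine ⟨h0, ?_, ?_, ?_⟩
  · rw [norm_div, div_le_one hp]
    apply (pow_le_pow_iff_left₀ (norm_nonneg _) hp.le two_ne_zero).1
    nlinarith [mul_nonneg h1s.le (by nlinarith : 0 ≤ 1 - ‖z‖ ^ 2)]
  · intro h
    rw [norm_div, div_lt_one hp]
    apply lt_of_pow_lt_pow_left₀ 2 hp.le
    nlinarith [mul_pos h1s (by nlinarith : 0 < 1 - ‖z‖ ^ 2)]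
  · intro h
    rw [norm_div, div_eq_one_iff_eq hp.ne']
    rw [h] at key
    have : ‖z + s‖ ^ 2 = ‖(1 + s * z : ℂ)‖ ^ 2 := by linarith
    exact (pow_left_inj₀ (norm_nonneg _) hp.le two_ne_zero).1 this

lemma bound (s : ℝ) (hs : s ∈ Set.Ioo (0 : ℝ) 1)
    (φ : ℂ → ℂ) (hφ : ∀ z : ℂ, φ z = (z + s) / (1 + s * z))
    (ψ : ℂ → ℂ)
    (hψc : ContinuousOn ψ (closedBall 0 1))
    (T : H2 →L[ℂ] H2)
    (hT : ∀ f : H2, ∀ z ∈ ball (0 : ℂ) 1, (T f).toFun z = ψ z * f.toFun (φ z))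
    (q : ℝ) (hq : 0 < q)
    (h1 : ‖ψ 1‖ * Real.sqrt ((1 + s) / (1 - s)) < q)
    (h2 : ‖ψ (-1)‖ * Real.sqrt ((1 - s) / (1 + s)) < q) :
    ∃ C : ℝ, 0 ≤ C ∧ ∀ n : ℕ, ‖T ^ n‖ ≤ C * q ^ n := by
  obtain ⟨A, hA, hlyap⟩ := lyap s hs ψ hψc q hq h1 h2
  have hφc : ContinuousOn φ (closedBall 0 1) := by
    have : φ = fun z : ℂ => (z + s) / (1 + s * z) := funext hφ
    rw [this]
    refine ContinuousOn.div (by fun_prop) (by fun_prop) (fun z hz => ?_)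
    exact (phi_norm s hs z (by simpa using hz)).1
  have hφm : Set.MapsTo φ (closedBall 0 1) (closedBall 0 1) := by
    intro z hz
    have := (phi_norm s hs z (by simpa using hz)).2.1
    rw [hφ]; simpa using this
  have hφb : Set.MapsTo φ (ball 0 1) (ball 0 1) := by
    intro z hz
    have hz' : ‖z‖ < 1 := by simpa using hz
    have := (phi_norm s hs z hz'.le).2.2.1 hz'
    rw [hφ]; simpa using this
  have hcirc : ∀ θ : ℝ, circleMap 0 1 θ ∈ sphere (0 : ℂ) 1 := fun θ => by simp [circleMap]
  have hcirc' : ∀ θ : ℝ, circleMap 0 1 θ ∈ closedBall (0 : ℂ) 1 :=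
    fun θ => sphere_subset_closedBall (hcirc θ)
  set N : (ℂ → ℂ) → ℝ := fun F => ∫ θ in (0 : ℝ)..2 * Real.pi,
    ‖F (circleMap 0 1 θ)‖ ^ 2 * Real.exp (2 * A * (circleMap 0 1 θ).re) with hN
  have hcomp : ∀ F : ℂ → ℂ, ContinuousOn F (closedBall 0 1) →
      Continuous (fun θ : ℝ => F (circleMap 0 1 θ)) := fun F hF =>
    hF.comp_continuous (continuous_circleMap 0 1) hcirc'
  have hre : Continuous (fun θ : ℝ => Real.exp (2 * A * (circleMap 0 1 θ).re)) := by
    have := continuous_circleMap 0 1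
    fun_prop
  have hFφc : ∀ F : ℂ → ℂ, ContinuousOn F (closedBall 0 1) →
      ContinuousOn (fun z => ψ z * F (φ z)) (closedBall 0 1) := fun F hF =>
    hψc.mul (hF.comp hφc hφm)
  have hstep : ∀ F : ℂ → ℂ, ContinuousOn F (closedBall 0 1) →
      N (fun z => ψ z * F (φ z)) ≤ q ^ 2 * N F := by
    intro F hF
    have hcv := change_var s hs (fun z => ‖F z‖ ^ 2 * Real.exp (2 * A * z.re))
      (((hF.mono sphere_subset_closedBall).norm.pow 2).mul
        (Continuous.continuousOn (by fun_prop)))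
    simp only [hN]
    rw [← hcv, ← intervalIntegral.integral_const_mul]
    have hcosre : ∀ θ : ℝ, Real.cos θ = (circleMap 0 1 θ).re := fun θ => by
      simp [circleMap, Complex.exp_ofReal_mul_I_re]
    apply intervalIntegral.integral_mono_on Real.two_pi_pos.le
    · apply Continuous.intervalIntegrable
      exact ((hcomp _ (hFφc F hF)).norm.pow 2).mul hre
    · apply Continuous.intervalIntegrable
      have e1 := hcomp _ (hF.comp hφc hφm)
      have e2 := hcomp _ hφc
      simp only [Function.comp, hφ] at e1 e2
      refine continuous_const.mul (((e1.norm.pow 2).mul ?_).mul ?_)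
      · exact Real.continuous_exp.comp (continuous_const.mul (Complex.continuous_re.comp e2))
      · refine Continuous.div (by fun_prop) (by fun_prop) (fun θ => ?_)
        exact (den_pos s hs _ (Real.neg_one_le_cos θ)).ne'
    · intro θ _
      have hl := hlyap _ (hcirc θ)
      rw [norm_mul, mul_pow, hcosre, hφ]
      have hp : 0 ≤ ‖F ((circleMap 0 1 θ + s) / (1 + s * circleMap 0 1 θ))‖ ^ 2 := by positivity
      have := mul_le_mul_of_nonneg_left hl hp
      linarith
  have hiter : ∀ n : ℕ, ∀ (f : H2) (F : ℂ → ℂ), ContinuousOn F (closedBall 0 1) →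
      (∀ z ∈ ball (0 : ℂ) 1, f.toFun z = F z) →
      ∃ G : ℂ → ℂ, ContinuousOn G (closedBall 0 1) ∧
        (∀ z ∈ ball (0 : ℂ) 1, ((T ^ n) f).toFun z = G z) ∧ N G ≤ (q ^ 2) ^ n * N F := by
    intro n
    induction n with
    | zero => intro f F hF hfF; exact ⟨F, hF, by simpa using hfF, by simp⟩
    | succ n ih =>
      intro f F hF hfF
      obtain ⟨G, hG, hTG, hNG⟩ := ih f F hF hfF
      refine ⟨fun z => ψ z * G (φ z), hFφc G hG, ?_, ?_⟩
      · intro z hz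
        rw [pow_succ', mul_apply_eq_comp, hT _ z hz, hTG _ (hφb hz)]
      · calc _ ≤ q ^ 2 * N G := hstep G hG
          _ ≤ q ^ 2 * ((q ^ 2) ^ n * N F) := by gcongr
          _ = _ := by ring
  have hrebd : ∀ θ : ℝ, |(circleMap 0 1 θ).re| ≤ 1 := fun θ => by
    simpa [circleMap, Complex.exp_ofReal_mul_I_re] using Real.abs_cos_le_one θ
  have hN1 : ∀ F : ℂ → ℂ, ContinuousOn F (closedBall 0 1) →
      (∫ θ in (0 : ℝ)..2 * Real.pi, ‖F (circleMap 0 1 θ)‖ ^ 2) ≤ Real.exp (2 * A) * N F := by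
    intro F hF
    simp only [hN]
    rw [← intervalIntegral.integral_const_mul]
    apply intervalIntegral.integral_mono_on Real.two_pi_pos.le
    · exact ((hcomp F hF).norm.pow 2).intervalIntegrable _ _
    · exact (continuous_const.mul (((hcomp F hF).norm.pow 2).mul hre)).intervalIntegrable _ _
    · intro θ _
      have : 1 ≤ Real.exp (2 * A) * Real.exp (2 * A * (circleMap 0 1 θ).re) := by
        rw [← Real.exp_add]
        apply Real.one_le_exp
        nlinarith [(abs_le.1 (hrebd θ)).1]
      nlinarith [mul_le_mul_of_nonneg_left this (sq_nonneg ‖F (circleMap 0 1 θ)‖)]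
  have hN2 : ∀ F : ℂ → ℂ, ContinuousOn F (closedBall 0 1) →
      N F ≤ Real.exp (2 * A) * ∫ θ in (0 : ℝ)..2 * Real.pi, ‖F (circleMap 0 1 θ)‖ ^ 2 := by
    intro F hF
    simp only [hN]
    rw [← intervalIntegral.integral_const_mul]
    apply intervalIntegral.integral_mono_on Real.two_pi_pos.le
    · exact (((hcomp F hF).norm.pow 2).mul hre).intervalIntegrable _ _
    · exact (continuous_const.mul ((hcomp F hF).norm.pow 2)).intervalIntegrable _ _
    · intro θ _
      rw [mul_comm]
      refine mul_le_mul_of_nonneg_right (Real.exp_le_exp.2 ?_) (sq_nonneg _)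
      nlinarith [(abs_le.1 (hrebd θ)).2]
  have hpoly : ∀ n : ℕ, ∀ (f : H2) (F : ℂ → ℂ), ContinuousOn F (closedBall 0 1) →
      (∀ z ∈ ball (0 : ℂ) 1, f.toFun z = F z) →
      ‖(T ^ n) f‖ ≤ Real.exp (2 * A) * q ^ n * ‖f‖ := by
    intro n f F hF hfF
    obtain ⟨G, hG, hTG, hNG⟩ := hiter n f F hF hfF
    apply (pow_le_pow_iff_left₀ (norm_nonneg _) (by positivity) two_ne_zero).1
    have p1 := parseval _ G hG hTG
    have p2 := parseval f F hF hfF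
    rw [p1, mul_pow, p2]
    have hpi : 0 < (2 * Real.pi)⁻¹ := by positivity
    calc _ ≤ (2 * Real.pi)⁻¹ * (Real.exp (2 * A) * ((q ^ 2) ^ n * (Real.exp (2 * A) *
          ∫ θ in (0 : ℝ)..2 * Real.pi, ‖F (circleMap 0 1 θ)‖ ^ 2))) := by
          have b1 := hN1 G hG
          have b2 := hN2 F hF
          gcongr
          refine b1.trans ?_
          gcongr
          refine hNG.trans ?_
          gcongr
      _ = _ := by ring
  refine ⟨Real.exp (2 * A), by positivity, fun n => ?_⟩
  refine ContinuousLinearMap.opNorm_le_bound _ (by positivity) (fun f => ?_)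
  have hs := lp.hasSum_single (p := 2) (by norm_num) f
  have hclosed : IsClosed {g : H2 | ‖(T ^ n) g‖ ≤ Real.exp (2 * A) * q ^ n * ‖g‖} :=
    isClosed_le (by fun_prop) (by fun_prop)
  refine hclosed.mem_of_tendsto hs (Filter.Eventually.of_forall (fun S => ?_))
  refine hpoly n _ (fun z => ∑ k ∈ S, f k * z ^ k) (by fun_prop) (fun z _ => ?_)
  have hco : ∀ k : ℕ, (∑ i ∈ S, lp.single 2 i (f i) : H2) k = if k ∈ S then f k else 0 := by
    intro k
    rw [lp.coeFn_sum, Finset.sum_apply]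
    simp only [lp.single_apply]
    simp [Pi.single_apply]
  simp only [H2.toFun, hco]
  rw [tsum_eq_sum (s := S)]
  · exact Finset.sum_congr rfl (fun k hk => by simp [hk])
  · intro k hk; simp [hk]

/-- Let `φ(z) = (z+s)/(1+sz)` with `s ∈ (0,1)` and let `ψ` be holomorphic on `𝔻`, continuous
on the closed disc and bounded away from zero. Then the spectral radius of the weighted
composition operator `C_{ψ,φ}` on `H²(𝔻)` satisfies
`r(C_{ψ,φ}) ≤ max { |ψ(1)|((1+s)/(1-s))^{1/2}, |ψ(-1)|((1-s)/(1+s))^{1/2} }`. -/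
theorem stmt19 (s : ℝ) (hs : s ∈ Set.Ioo (0 : ℝ) 1)
    (φ : ℂ → ℂ) (hφ : ∀ z : ℂ, φ z = (z + s) / (1 + s * z))
    (ψ : ℂ → ℂ)
    (hψc : ContinuousOn ψ (closedBall 0 1))
    (hψ : DifferentiableOn ℂ ψ (ball 0 1))
    (hψ0 : ∃ ε > (0 : ℝ), ∀ z ∈ ball (0 : ℂ) 1, ε ≤ ‖ψ z‖)
    (T : H2 →L[ℂ] H2)
    (hT : ∀ f : H2, ∀ z ∈ ball (0 : ℂ) 1, (T f).toFun z = ψ z * f.toFun (φ z)) :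
    spectralRadius ℂ T ≤
      ENNReal.ofReal
        (max (‖ψ 1‖ * Real.sqrt ((1 + s) / (1 - s)))
             (‖ψ (-1)‖ * Real.sqrt ((1 - s) / (1 + s)))) := by
  set M := max (‖ψ 1‖ * Real.sqrt ((1 + s) / (1 - s)))
             (‖ψ (-1)‖ * Real.sqrt ((1 - s) / (1 + s))) with hM
  have hM0 : 0 ≤ M := le_max_of_le_left (by positivity)
  refine iSup₂_le (fun k hk => ?_)
  suffices h : ‖k‖ ≤ M by
    refine le_trans (le_of_eq ?_) (ENNReal.ofReal_le_ofReal h)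
    exact (ofReal_norm_eq_enorm k).symm
  refine le_of_forall_gt_imp_ge_of_dense (fun q hqM => ?_)
  have hq : 0 < q := hM0.trans_lt hqM
  obtain ⟨C, hC, hb⟩ := bound s hs φ hφ ψ hψc T hT q hq
    ((le_max_left _ _).trans_lt hqM) ((le_max_right _ _).trans_lt hqM)
  by_contra hcon
  push Not at hcon
  have hr : 1 < ‖k‖ / q := (one_lt_div hq).2 hcon
  obtain ⟨n, hn⟩ := pow_unbounded_of_one_lt (C * ‖(1 : H2 →L[ℂ] H2)‖) hr
  have h1 := spectrum.norm_le_norm_mul_of_mem (spectrum.pow_mem_pow T n hk)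
  rw [norm_pow] at h1
  rw [div_pow, lt_div_iff₀ (by positivity)] at hn
  have h2 := mul_le_mul_of_nonneg_right (hb n) (norm_nonneg (1 : H2 →L[ℂ] H2))
  linarith
end
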